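/- arXiv:2112.08685 — 6 statements merged into one kernel-verified Lean document; each statement's English description precedes it below -/
import Mathlib

section
/- Let 0 < p < 2/3, let s ≥ 1 be an integer, and let 𝒢 ⊆ 2^[n]. If every G ∈ 𝒢 hits the line y = 2x + s (i.e., for every G ∈ 𝒢 there exists 0 ≤ j ≤ n with 3|G∩[j]| = 2j + s), then μ_p(𝒢) ≤ α^s, where α = (√((1+3p)/(1−p)) − 1)/2. -/
/-!
The value `3|G ∩ [j]| - 2j` is a random walk with steps `+1` (probability `p`) and `-2`
(probability `1 - p`), and hitting the line `y = 2x + s` means that this walk reaches `s`. Since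
`α = p + (1 - p) α ^ 3` (`alpha_root`), `α` to the power of the distance to the level `s` is a
martingale, and so is its version stopped at the hitting time (`stoppedValue_step`); at time `0`
it equals `α ^ s`, hence so does its mean at time `n` (`sum_stoppedValue`). The stopped value is
nonnegative, and it equals `1` on every `G` that hits the line, so its mean bounds the measure of
any family of such `G`. Steps up have size `1`, so the level `s` cannot be jumped over
(`lt_of_not_hitsLine`).
-/

open Finset

/-- The `p`-measure of a family of subsets of `[n] = {1,…,n}`. -/
noncomputable def mu (p : ℝ) (n : ℕ) (𝒢 : Finset (Finset ℕ)) : ℝ :=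
  ∑ G ∈ 𝒢, p ^ G.card * (1 - p) ^ (n - G.card)

/-- `𝒢` is a family of subsets of `[n] = {1,…,n}`. -/
def FamilyOn (n : ℕ) (𝒢 : Finset (Finset ℕ)) : Prop :=
  ∀ G ∈ 𝒢, G ⊆ Finset.Icc 1 n

/-- `𝒢` is 3-wise `t`-intersecting. -/
def Intersecting3 (t : ℕ) (𝒢 : Finset (Finset ℕ)) : Prop :=
  ∀ G₁ ∈ 𝒢, ∀ G₂ ∈ 𝒢, ∀ G₃ ∈ 𝒢, t ≤ (G₁ ∩ G₂ ∩ G₃).card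

/-- `𝒢` is shifted (stable under all shifting operations `σ_{i,j}`). -/
def Shifted (n : ℕ) (𝒢 : Finset (Finset ℕ)) : Prop :=
  ∀ i j : ℕ, 1 ≤ i → i < j → j ≤ n → ∀ G ∈ 𝒢, j ∈ G → i ∉ G →
    insert i (G.erase j) ∈ 𝒢

/-- `𝒢` is inclusion maximal as a family of subsets of `[n]`. -/
def InclMaximal (n : ℕ) (𝒢 : Finset (Finset ℕ)) : Prop :=
  ∀ G ∈ 𝒢, ∀ H : Finset ℕ, G ⊆ H → H ⊆ Finset.Icc 1 n → H ∈ 𝒢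

/-- The family `F_s^t = {F ⊆ [n] : |F ∩ [t+3s]| ≥ t+2s}`. -/
def Fst (n t s : ℕ) : Finset (Finset ℕ) :=
  (Finset.Icc 1 n).powerset.filter
    (fun F => t + 2 * s ≤ (F ∩ Finset.Icc 1 (t + 3 * s)).card)

/-- The threshold `p₀(t) = 2/(√(4t+9) − 1)`. -/
noncomputable def p0 (t : ℕ) : ℝ := 2 / (Real.sqrt (4 * t + 9) - 1)

/-- `α(p) = (√((1+3p)/(1−p)) − 1)/2`. -/
noncomputable def alpha (p : ℝ) : ℝ := (Real.sqrt ((1 + 3 * p) / (1 - p)) - 1) / 2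

/-- Two families of subsets of `[n]` are isomorphic: one is the image of the
other under a permutation of `[n]`. -/
def Isom (n : ℕ) (𝒢 𝒢' : Finset (Finset ℕ)) : Prop :=
  ∃ π : Equiv.Perm ℕ, (∀ x ∈ Finset.Icc 1 n, π x ∈ Finset.Icc 1 n) ∧
    𝒢' = 𝒢.image (fun G => G.image π)

/-- The walk of `G ⊆ [n]` hits the line `y = 2x + c`
(at some step `j ≤ n`, where hitting at step `j` means `3|G∩[j]| = 2j + c`). -/
def HitsLine (n c : ℕ) (G : Finset ℕ) : Prop :=
  ∃ j : ℕ, j ≤ n ∧ 3 * (G ∩ Finset.Icc 1 j).card = 2 * j + c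

/-! ### The stopped walk -/

theorem HitsLine.mono_right {n c : ℕ} {G : Finset ℕ} (h : HitsLine n c G) :
    HitsLine (n + 1) c G := by
  obtain ⟨j, hj, h⟩ := h
  exact ⟨j, by omega, h⟩

theorem hitsLine_succ {n c : ℕ} {G : Finset ℕ} (hG : G ⊆ Finset.Icc 1 (n + 1)) :
    HitsLine (n + 1) c G ↔ HitsLine n c G ∨ 3 * G.card = 2 * (n + 1) + c := by
  constructor
  · rintro ⟨j, hj, h⟩
    rcases Nat.lt_or_ge n j with hlt | hle
    · obtain rfl : j = n + 1 := by omega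
      rw [Finset.inter_eq_left.2 hG] at h
      exact Or.inr h
    · exact Or.inl ⟨j, hle, h⟩
  · rintro (h | h)
    · exact h.mono_right
    · exact ⟨n + 1, le_rfl, by rwa [Finset.inter_eq_left.2 hG]⟩

/-- Step `n + 1` does not affect whether the line is hit during the first `n` steps. -/
theorem hitsLine_insert {n c : ℕ} {G : Finset ℕ} :
    HitsLine n c (insert (n + 1) G) ↔ HitsLine n c G := by
  unfold HitsLine
  refine exists_congr fun j => and_congr_right fun hj => ?_
  rw [Finset.insert_inter_of_notMem (by simp; omega)]

/-- Along each step, `3|G ∩ [j]| - 2j` rises by at most `1`, so a walk that avoids the line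
stays strictly below it. -/
theorem lt_of_not_hitsLine {n c : ℕ} {G : Finset ℕ} (hG : G ⊆ Finset.Icc 1 n)
    (h : ¬ HitsLine n c G) : 3 * G.card < 2 * n + c := by
  have key : ∀ j ≤ n, 3 * (G ∩ Finset.Icc 1 j).card < 2 * j + c := by
    intro j
    induction j with
    | zero =>
      intro hj
      have h0 : 3 * (G ∩ Finset.Icc 1 0).card ≠ 2 * 0 + c := fun h0 => h ⟨0, hj, h0⟩
      simp at h0 ⊢
      omega
    | succ j ih =>
      intro hj
      have h1 : 3 * (G ∩ Finset.Icc 1 (j + 1)).card ≠ 2 * (j + 1) + c :=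
        fun h1 => h ⟨j + 1, hj, h1⟩
      have h2 : (G ∩ Finset.Icc 1 (j + 1)).card ≤ (G ∩ Finset.Icc 1 j).card + 1 := by
        refine le_trans (Finset.card_le_card ?_)
          (Finset.card_insert_le (j + 1) (G ∩ Finset.Icc 1 j))
        intro x hx
        simp only [Finset.mem_inter, Finset.mem_Icc, Finset.mem_insert] at hx ⊢
        have := hx.2
        by_cases hxj : x = j + 1
        · exact Or.inl hxj
        · exact Or.inr ⟨hx.1, by omega, by omega⟩
      have := ih (by omega)
      omega
  have := key n le_rfl
  rwa [Finset.inter_eq_left.2 hG] at this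

/-! ### The martingale -/

open Classical in
/-- The value at time `n` of the stopped martingale: `a` to the power of the distance
`2n + c - 3|G|` from the line, frozen at `a ^ 0 = 1` once the line has been hit. The truncated
subtraction is harmless because a walk that has not hit the line is strictly below it. -/
noncomputable def stoppedValue (a : ℝ) (n c : ℕ) (G : Finset ℕ) : ℝ :=
  if HitsLine n c G then 1 else a ^ (2 * n + c - 3 * G.card)

/-- The martingale property: averaging over step `n + 1` leaves the value unchanged. -/
theorem stoppedValue_step {p a : ℝ} (ha : p + (1 - p) * a ^ 3 = a) {n c : ℕ} {G : Finset ℕ}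
    (hG : G ⊆ Finset.Icc 1 n) :
    (1 - p) * stoppedValue a (n + 1) c G + p * stoppedValue a (n + 1) c (insert (n + 1) G)
      = stoppedValue a n c G := by
  have hsub : Finset.Icc 1 n ⊆ Finset.Icc 1 (n + 1) := Finset.Icc_subset_Icc_right (by omega)
  have hmem : n + 1 ∉ G := fun h => by
    have := Finset.mem_Icc.1 (hG h)
    omega
  have h1 := hitsLine_succ (c := c) (hG.trans hsub)
  have h2 := hitsLine_succ (n := n) (c := c) (G := insert (n + 1) G)
    (Finset.insert_subset (by simp) (hG.trans hsub))
  rw [hitsLine_insert, Finset.card_insert_of_notMem hmem] at h2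
  by_cases h : HitsLine n c G
  · unfold stoppedValue
    rw [if_pos (h1.2 (Or.inl h)), if_pos (h2.2 (Or.inl h)), if_pos h]
    ring
  · have hlt := lt_of_not_hitsLine hG h
    obtain ⟨e, he⟩ : ∃ e, 2 * n + c = 3 * G.card + (e + 1) :=
      ⟨2 * n + c - 3 * G.card - 1, by omega⟩
    have hn1 : ¬ HitsLine (n + 1) c G := by
      rw [h1]
      rintro (hit | heq)
      · exact h hit
      · omega
    -- If the up-step reaches the line, the exponent `e` is `0` and both branches give `1`.
    have hup : stoppedValue a (n + 1) c (insert (n + 1) G) = a ^ e := by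
      unfold stoppedValue
      rw [Finset.card_insert_of_notMem hmem]
      split_ifs with hhit
      · rcases h2.1 hhit with hit | heq
        · exact absurd hit h
        · obtain rfl : e = 0 := by omega
          simp
      · congr 1
        omega
    rw [hup, stoppedValue, stoppedValue, if_neg hn1, if_neg h,
      show 2 * (n + 1) + c - 3 * G.card = e + 3 by omega,
      show 2 * n + c - 3 * G.card = e + 1 by omega]
    linear_combination a ^ e * ha

theorem sum_stoppedValue {p a : ℝ} (ha : p + (1 - p) * a ^ 3 = a) (n c : ℕ) :
    ∑ G ∈ (Finset.Icc 1 n).powerset,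
      p ^ G.card * (1 - p) ^ (n - G.card) * stoppedValue a n c G = a ^ c := by
  induction n with
  | zero =>
    simp only [stoppedValue, HitsLine]
    by_cases hc : c = 0 <;> simp [hc, eq_comm]
  | succ n ih =>
    rw [← ih, ← Finset.insert_Icc_right_eq_Icc_add_one (by omega : 1 ≤ n + 1),
      Finset.sum_powerset_insert (by simp), ← Finset.sum_add_distrib]
    refine Finset.sum_congr rfl fun G hG => ?_
    have hG := Finset.mem_powerset.1 hG
    have hmem : n + 1 ∉ G := fun h => by
      have := Finset.mem_Icc.1 (hG h)
      omega
    have hcard : G.card ≤ n := by simpa using Finset.card_le_card hG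
    rw [← stoppedValue_step ha hG, Finset.card_insert_of_notMem hmem,
      show n + 1 - G.card = (n - G.card) + 1 by omega,
      show n + 1 - (G.card + 1) = n - G.card by omega]
    ring

/-! ### The base `alpha p` -/

theorem alpha_nonneg {p : ℝ} (hp : 0 < p) (hp' : p < 1) : 0 ≤ alpha p := by
  have : 1 ≤ Real.sqrt ((1 + 3 * p) / (1 - p)) := by
    rw [Real.one_le_sqrt, le_div_iff₀ (by linarith)]
    linarith
  unfold alpha
  linarith

/-- `alpha p` is a root of `p + (1 - p) x ^ 3 - x = (x - 1) ((1 - p) (x ^ 2 + x) - p)`. -/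
theorem alpha_root {p : ℝ} (hp : 0 < p) (hp' : p < 1) :
    p + (1 - p) * alpha p ^ 3 = alpha p := by
  have hq : 1 - p ≠ 0 := by linarith
  have hsq : Real.sqrt ((1 + 3 * p) / (1 - p)) ^ 2 * (1 - p) = 1 + 3 * p := by
    rw [Real.sq_sqrt (div_nonneg (by linarith) (by linarith)), div_mul_cancel₀ _ hq]
  have hquad : (1 - p) * (alpha p ^ 2 + alpha p) = p := by
    unfold alpha
    linear_combination hsq / 4
  linear_combination (alpha p - 1) * hquad

/-- Lemma 2 (random walk bound): if every member of `𝒢 ⊆ 2^[n]` hits the line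
`y = 2x + s` then `μ_p(𝒢) ≤ α^s`, where `α = (√((1+3p)/(1−p)) − 1)/2`. -/
theorem lemma2 (n s : ℕ) (hs : 1 ≤ s) (p : ℝ) (hp : 0 < p) (hp' : p < 2 / 3)
    (𝒢 : Finset (Finset ℕ)) (hfam : FamilyOn n 𝒢)
    (hhit : ∀ G ∈ 𝒢, HitsLine n s G) :
    mu p n 𝒢 ≤ alpha p ^ s := by
  have hq : p < 1 := by linarith
  have hsub : 𝒢 ⊆ (Finset.Icc 1 n).powerset := fun G hG => Finset.mem_powerset.2 (hfam G hG)
  rw [← sum_stoppedValue (alpha_root hp hq) n s]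
  unfold mu
  calc ∑ G ∈ 𝒢, p ^ G.card * (1 - p) ^ (n - G.card)
      = ∑ G ∈ 𝒢, p ^ G.card * (1 - p) ^ (n - G.card) * stoppedValue (alpha p) n s G := by
        refine Finset.sum_congr rfl fun G hG => ?_
        rw [stoppedValue, if_pos (hhit G hG), mul_one]
    _ ≤ _ := by
        refine Finset.sum_le_sum_of_subset_of_nonneg hsub fun G _ _ => ?_
        have h1 : 0 ≤ 1 - p := by linarith
        have h2 : 0 ≤ stoppedValue (alpha p) n s G := by
          unfold stoppedValue
          split_ifs
          · exact zero_le_one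
          · exact pow_nonneg (alpha_nonneg hp hq) _
        positivity
end

section
/- Let 𝒢, ℋ ⊆ 2^[n]. If 𝒢 is shifted and inclusion maximal, and there exists H ∈ ℋ ∖ 𝒢 which is the shift-end in ℋ (i.e., G ↝ H for all G ∈ ℋ), then 𝒢 ∩ ℋ = ∅. -/
/-!
Membership in a shifted, inclusion maximal family `𝒢` is preserved along `G ↝ H`. Let
`g₀ < g₁ < ⋯ < g_{k-1}` enumerate `G` and let `h₀ < h₁ < ⋯` enumerate `H`, so that `h_i ≤ g_i` for
`i < k`. Replacing `g₀, g₁, …` by `h₀, h₁, …` one at a time, from the smallest index on, passes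
through the sets `{h₀, …, h_{m-1}, g_m, …, g_{k-1}}`. Since `h_{m-1} < h_m ≤ g_m < g_{m+1}`, each
replacement is either trivial or a shift `σ_{h_m, g_m}`, so every such set lies in `𝒢`
(`hybrid_mem`). The last of these sets is contained in `H`, so `H ∈ 𝒢` by inclusion maximality
(`mem_of_shiftsTo`). A common member of `𝒢` and `ℋ` would therefore force the shift-end into `𝒢`.
-/

open Finset

/-- `G` shifts to `H` (`G ↝ H`): `|G| ≤ |H|` and for each `i ≤ |G|` the `i`-th
smallest element of `G` is at least the `i`-th smallest element of `H`. -/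
def ShiftsTo (G H : Finset ℕ) : Prop :=
  G.card ≤ H.card ∧
    ∀ i : ℕ, i < G.card →
      (H.sort (· ≤ ·)).getD i 0 ≤ (G.sort (· ≤ ·)).getD i 0

/-- The `i`-th smallest element of `G`, counted from `0`; it is `0` for `i ≥ |G|`. -/
def nthElem (G : Finset ℕ) (i : ℕ) : ℕ := (G.sort (· ≤ ·)).getD i 0

lemma nthElem_lt {G : Finset ℕ} {i j : ℕ} (hij : i < j) (hj : j < G.card) :
    nthElem G i < nthElem G j := by
  have hl : (G.sort (· ≤ ·)).length = G.card := Finset.length_sort _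
  have hi' : i < (G.sort (· ≤ ·)).length := by omega
  have hj' : j < (G.sort (· ≤ ·)).length := by omega
  simp only [nthElem, List.getD_eq_getElem _ _ hi', List.getD_eq_getElem _ _ hj']
  exact List.pairwise_iff_getElem.1 (Finset.sortedLT_sort G).pairwise i j hi' hj' hij

lemma nthElem_mem {G : Finset ℕ} {i : ℕ} (hi : i < G.card) : nthElem G i ∈ G := by
  have hi' : i < (G.sort (· ≤ ·)).length := by rwa [Finset.length_sort]
  rw [nthElem, List.getD_eq_getElem _ _ hi', ← Finset.mem_sort (· ≤ ·)]
  exact List.getElem_mem hi'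

lemma exists_nthElem {G : Finset ℕ} {x : ℕ} (hx : x ∈ G) :
    ∃ i < G.card, nthElem G i = x := by
  obtain ⟨i, hi, rfl⟩ := List.getElem_of_mem ((Finset.mem_sort (· ≤ ·)).2 hx)
  exact ⟨i, by rwa [Finset.length_sort] at hi, by rw [nthElem, List.getD_eq_getElem _ _ hi]⟩

/-- The set obtained from `G` by replacing its `m` smallest elements by those of `H`. -/
def hybrid (G H : Finset ℕ) (m : ℕ) : Finset ℕ :=
  (range G.card).image fun i => if i < m then nthElem H i else nthElem G i

lemma mem_hybrid {G H : Finset ℕ} {m x : ℕ} :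
    x ∈ hybrid G H m ↔ ∃ i < G.card, (if i < m then nthElem H i else nthElem G i) = x := by
  simp [hybrid]

lemma hybrid_zero (G H : Finset ℕ) : hybrid G H 0 = G := by
  ext x
  rw [mem_hybrid]
  constructor
  · rintro ⟨i, hi, rfl⟩
    simpa using nthElem_mem hi
  · intro hx
    simpa using exists_nthElem hx

/-- With `h_i`, `g_i` the `i`-th smallest elements of `H`, `G`: in the sequence
`h_0, …, h_{m-1}, g_m, g_{m+1}, …` the entries before the `m`-th lie below the interval
`[h_m, g_m]`, and those after it lie above. -/
lemma hybrid_entry {G H : Finset ℕ} (hGH : ShiftsTo G H) {m i : ℕ} (hm : m < G.card)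
    (hi : i < G.card) :
    (i < m → nthElem H i < nthElem H m) ∧ (m < i → nthElem G m < nthElem G i) ∧
      nthElem H m ≤ nthElem G m :=
  ⟨fun h => nthElem_lt h (hm.trans_le hGH.1), fun h => nthElem_lt h hi, hGH.2 m hm⟩

lemma hybrid_succ {G H : Finset ℕ} (hGH : ShiftsTo G H) {m : ℕ} (hm : m < G.card) :
    hybrid G H (m + 1) = insert (nthElem H m) ((hybrid G H m).erase (nthElem G m)) := by
  ext x
  rw [mem_insert, mem_erase, mem_hybrid, mem_hybrid]
  constructor
  · rintro ⟨i, hi, rfl⟩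
    have := hybrid_entry hGH hm hi
    rcases lt_trichotomy i m with h | rfl | h
    · refine Or.inr ⟨?_, i, hi, ?_⟩ <;> grind
    · left; simp
    · refine Or.inr ⟨?_, i, hi, ?_⟩ <;> grind
  · rintro (rfl | ⟨hne, i, hi, rfl⟩)
    · exact ⟨m, hm, by simp⟩
    · refine ⟨i, hi, ?_⟩
      grind

lemma hybrid_mem {n : ℕ} {𝒢 : Finset (Finset ℕ)} (hsh : Shifted n 𝒢) {G H : Finset ℕ}
    (hG : G ∈ 𝒢) (hGn : G ⊆ Icc 1 n) (hHn : H ⊆ Icc 1 n) (hGH : ShiftsTo G H) (m : ℕ)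
    (hm : m ≤ G.card) : hybrid G H m ∈ 𝒢 := by
  induction m with
  | zero => rwa [hybrid_zero]
  | succ m ih =>
    have hmG : m < G.card := hm
    have hmem : nthElem G m ∈ hybrid G H m := mem_hybrid.2 ⟨m, hmG, by simp⟩
    rw [hybrid_succ hGH hmG]
    have hle : nthElem H m ≤ nthElem G m := hGH.2 m hmG
    rcases hle.eq_or_lt with heq | hlt
    · rw [heq, insert_erase hmem]
      exact ih hmG.le
    · refine hsh _ _ (mem_Icc.1 (hHn (nthElem_mem (hmG.trans_le hGH.1)))).1 hlt
        (mem_Icc.1 (hGn (nthElem_mem hmG))).2 _ (ih hmG.le) hmem ?_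
      rw [mem_hybrid]
      rintro ⟨i, hi, hx⟩
      have := hybrid_entry hGH hmG hi
      rcases lt_trichotomy i m with h | rfl | h <;> grind

/-- A shifted, inclusion maximal family is closed under `↝`. -/
lemma mem_of_shiftsTo {n : ℕ} {𝒢 : Finset (Finset ℕ)} (hsh : Shifted n 𝒢)
    (hmax : InclMaximal n 𝒢) {G H : Finset ℕ} (hG : G ∈ 𝒢) (hGn : G ⊆ Icc 1 n)
    (hHn : H ⊆ Icc 1 n) (hGH : ShiftsTo G H) : H ∈ 𝒢 := by
  refine hmax _ (hybrid_mem hsh hG hGn hHn hGH G.card le_rfl) H (fun x hx => ?_) hHn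
  obtain ⟨i, hi, rfl⟩ := mem_hybrid.1 hx
  rw [if_pos hi]
  exact nthElem_mem (hi.trans_le hGH.1)

/-- Lemma 4: if `𝒢` is shifted and inclusion maximal, and `H ∈ ℋ ∖ 𝒢` is the
shift-end in `ℋ`, then `𝒢 ∩ ℋ = ∅`. -/
theorem lemma4 (n : ℕ) (𝒢 ℋ : Finset (Finset ℕ))
    (hfamG : FamilyOn n 𝒢) (hfamH : FamilyOn n ℋ)
    (hsh : Shifted n 𝒢) (hmax : InclMaximal n 𝒢)
    (H : Finset ℕ) (hHmem : H ∈ ℋ) (hHnot : H ∉ 𝒢)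
    (hend : ∀ G ∈ ℋ, ShiftsTo G H) :
    𝒢 ∩ ℋ = ∅ := by
  refine eq_empty_of_forall_notMem fun G hG => hHnot ?_
  obtain ⟨hG𝒢, hGℋ⟩ := mem_inter.1 hG
  exact mem_of_shiftsTo hsh hmax hG𝒢 (hfamG G hG𝒢) (hfamH H hHmem) (hend G hGℋ)
end

section
/- Let n ≥ t ≥ 1 and 0 ≤ s ≤ (n−t)/3, and let 𝒢 ⊆ 2^[n] be a 3-wise t-intersecting family. If σ_{i,j}(𝒢) = F_s^t for some 1 ≤ i < j ≤ n, then 𝒢 is isomorphic to F_s^t. -/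
/-!
Write `T = [t+3s]` and `k = t+2s`. Undoing the shift only affects pairs `{H, τ H}`, with `τ` the
transposition `(i j)`, of which exactly one member lies in `F_s^t` (`mem_or_of_mem_Fst`,
`swap_mem_of_mem_Fst`, `mem_Fst_or`). If `𝒢 ⊆ F_s^t` then `𝒢 = F_s^t`. Otherwise some `G₀ ∈ 𝒢`
lies outside `F_s^t`, which forces `i ∈ T`, `j ∉ T`, `j ∈ G₀`, `i ∉ G₀`, `|G₀ ∩ T| = k - 1`, and
it is shown that `τ` carries `𝒢` to `F_s^t`. The only obstruction is a set `G ∈ 𝒢` with `i ∈ G`,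
`j ∉ G`, `|G ∩ T| = k`.

Such a `G` cannot coexist with `G₀`. Apart from `i`, both sets miss exactly `s` elements of `T`.
If the missed sets are disjoint, then `|T ∩ G ∩ G₀| = t + s - 1`, and a third set of `𝒢` containing
`i` and `j` and missing `s` elements of `T ∩ G ∩ G₀` brings the triple intersection down to `t - 1`
(`false_of_disjoint_misses`). In general, since `|T \ {i}| ≥ 3s`, there is an `s`-set
`Z ⊆ T \ {i}` disjoint from both missed sets; one of `T \ Z` and `τ (T \ Z)` is in `𝒢`, and it
conflicts with `G₀` or with `G` respectively (`false_of_mixed`).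
-/


open Finset

/-- The shifting operation `σ_{i,j}`. -/
def shiftOp (i j : ℕ) (𝒢 : Finset (Finset ℕ)) : Finset (Finset ℕ) :=
  𝒢.image (fun G =>
    if j ∈ G ∧ i ∉ G ∧ insert i (G.erase j) ∉ 𝒢 then insert i (G.erase j) else G)

theorem mem_Fst {n t s : ℕ} {H : Finset ℕ} :
    H ∈ Fst n t s ↔ H ⊆ Icc 1 n ∧ t + 2 * s ≤ (H ∩ Icc 1 (t + 3 * s)).card := by
  simp [Fst]

theorem insert_erase_cancel {i j : ℕ} {G : Finset ℕ} (hj : j ∈ G) (hi : i ∉ G) :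
    insert j ((insert i (G.erase j)).erase i) = G := by
  ext x
  simp only [mem_insert, mem_erase]
  grind

theorem image_swap_eq {i j : ℕ} {G : Finset ℕ} (hj : j ∈ G) (hi : i ∉ G) :
    G.image (Equiv.swap i j) = insert i (G.erase j) := by
  ext x
  simp only [mem_image, mem_insert, mem_erase]
  constructor
  · rintro ⟨y, hy, rfl⟩
    grind
  · intro h
    refine ⟨Equiv.swap i j x, ?_, Equiv.swap_apply_self i j x⟩
    grind

theorem image_swap_eq_self {i j : ℕ} {G : Finset ℕ} (h : i ∈ G ↔ j ∈ G) :
    G.image (Equiv.swap i j) = G := by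
  ext x
  simp only [mem_image]
  constructor
  · rintro ⟨y, hy, rfl⟩
    grind
  · intro hx
    refine ⟨Equiv.swap i j x, ?_, Equiv.swap_apply_self i j x⟩
    grind

theorem image_swap_image_swap (i j : ℕ) (G : Finset ℕ) :
    (G.image (Equiv.swap i j)).image (Equiv.swap i j) = G := by
  rw [image_image, ← Equiv.coe_trans, Equiv.swap_swap, Equiv.coe_refl, image_id]

section

variable {n t s i j : ℕ} {𝒢 : Finset (Finset ℕ)}

/-- A set of the shifted family was either already present or comes from a moved set. -/
theorem mem_or_of_mem_Fst (hshift : shiftOp i j 𝒢 = Fst n t s) {H : Finset ℕ}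
    (hH : H ∈ Fst n t s) (hij : i < j) :
    H ∈ 𝒢 ∨ (i ∈ H ∧ j ∉ H ∧ insert j (H.erase i) ∈ 𝒢) := by
  rw [← hshift, shiftOp, mem_image] at hH
  obtain ⟨G, hG, rfl⟩ := hH
  split_ifs with h
  · right
    rw [insert_erase_cancel h.1 h.2.1]
    refine ⟨mem_insert_self _ _, ?_, hG⟩
    simp only [mem_insert, mem_erase]
    omega
  · exact Or.inl hG

/-- A set of the shifted family containing `j` but not `i` blocked the move, so its shift was
present from the start. -/
theorem swap_mem_of_mem_Fst (hshift : shiftOp i j 𝒢 = Fst n t s) {H : Finset ℕ}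
    (hH : H ∈ Fst n t s) (hj : j ∈ H) (hi : i ∉ H) :
    insert i (H.erase j) ∈ 𝒢 := by
  rw [← hshift, shiftOp, mem_image] at hH
  obtain ⟨G, hG, rfl⟩ := hH
  split_ifs at hi hj ⊢ with h
  · simp at hi
  · by_contra hc
    exact h ⟨hj, hi, hc⟩

theorem mem_Fst_or (hshift : shiftOp i j 𝒢 = Fst n t s) {G : Finset ℕ} (hG : G ∈ 𝒢) :
    G ∈ Fst n t s ∨ (j ∈ G ∧ i ∉ G ∧ insert i (G.erase j) ∈ Fst n t s) := by
  have h := mem_image_of_mem (fun G =>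
    if j ∈ G ∧ i ∉ G ∧ insert i (G.erase j) ∉ 𝒢 then insert i (G.erase j) else G) hG
  change _ ∈ shiftOp i j 𝒢 at h
  rw [hshift] at h
  split_ifs at h with hc
  · exact Or.inr ⟨hc.1, hc.2.1, h⟩
  · exact Or.inl h

theorem false_of_disjoint_misses (ht : 1 ≤ t) (hn : t + 3 * s ≤ n)
    (hint : Intersecting3 t 𝒢) (hij : i < j) (hj1 : j ≤ n)
    (hshift : shiftOp i j 𝒢 = Fst n t s)
    (hjT : j ∉ Icc 1 (t + 3 * s))
    {G G₀ : Finset ℕ} (hG : G ∈ 𝒢) (hG₀ : G₀ ∈ 𝒢)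
    (hjG : j ∉ G)
    (hcG : (Icc 1 (t + 3 * s) \ G).card = s)
    (hcG₀ : (Icc 1 (t + 3 * s) \ G₀).card = s + 1)
    (hdisj : Disjoint (Icc 1 (t + 3 * s) \ G) (Icc 1 (t + 3 * s) \ G₀)) : False := by
  set T := Icc 1 (t + 3 * s) with hT
  have hTc : T.card = t + 3 * s := by simp [hT]
  have hsplit : T ∩ (G ∩ G₀) = T \ ((T \ G) ∪ (T \ G₀)) := by
    ext x
    simp only [mem_inter, mem_sdiff, mem_union]
    tauto
  have hc : (T ∩ (G ∩ G₀)).card = t + s - 1 := by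
    rw [hsplit, card_sdiff_of_subset (union_subset sdiff_subset sdiff_subset),
      card_union_of_disjoint hdisj]
    omega
  obtain ⟨Z, hZ, hZc⟩ := exists_subset_card_eq (show s ≤ (T ∩ (G ∩ G₀)).card by omega)
  have hZT : Z ⊆ T := hZ.trans inter_subset_left
  have hC : insert j (T \ Z) ∈ Fst n t s := by
    rw [mem_Fst]
    refine ⟨?_, ?_⟩
    · intro x hx
      simp only [hT, mem_insert, mem_sdiff, mem_Icc] at hx ⊢
      omega
    · have : T \ Z ⊆ insert j (T \ Z) ∩ T :=
        subset_inter (subset_insert _ _) sdiff_subset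
      have h2 := card_le_card this
      rw [card_sdiff_of_subset hZT] at h2
      rw [← hT]
      omega
  have hC' : insert j (T \ Z) ∈ 𝒢 := by
    rcases mem_or_of_mem_Fst hshift hC hij with h | h
    · exact h
    · exact absurd (mem_insert_self _ _) h.2.1
  have h1 := hint _ hG _ hG₀ _ hC'
  have h2 : G ∩ G₀ ∩ insert j (T \ Z) ⊆ (T ∩ (G ∩ G₀)) \ Z := by
    intro x hx
    simp only [mem_inter, mem_insert, mem_sdiff] at hx ⊢
    rcases hx with ⟨⟨ha, hb⟩, rfl | hc⟩
    · exact absurd ha hjG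
    · exact ⟨⟨hc.1, ha, hb⟩, hc.2⟩
  have h3 := card_le_card h2
  rw [card_sdiff_of_subset hZ] at h3
  omega

theorem false_of_mixed (ht : 1 ≤ t) (hn : t + 3 * s ≤ n)
    (hint : Intersecting3 t 𝒢) (hij : i < j) (hj1 : j ≤ n)
    (hshift : shiftOp i j 𝒢 = Fst n t s)
    (hiT : i ∈ Icc 1 (t + 3 * s)) (hjT : j ∉ Icc 1 (t + 3 * s))
    {G G₀ : Finset ℕ} (hG : G ∈ 𝒢) (hG₀ : G₀ ∈ 𝒢)
    (hiG : i ∈ G) (hjG : j ∉ G) (hiG₀ : i ∉ G₀)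
    (hcG : (G ∩ Icc 1 (t + 3 * s)).card = t + 2 * s)
    (hcG₀ : (G₀ ∩ Icc 1 (t + 3 * s)).card + 1 = t + 2 * s) : False := by
  have key := fun {G G₀ : Finset ℕ} =>
    false_of_disjoint_misses ht hn hint hij hj1 hshift hjT (G := G) (G₀ := G₀)
  set T := Icc 1 (t + 3 * s) with hT
  have hTc : T.card = t + 3 * s := by simp [hT]
  have hmG : (T \ G).card = s := by
    rw [card_sdiff]
    omega
  have hmG₀ : (T \ G₀).card = s + 1 := by
    rw [card_sdiff]
    omega
  -- `i ∈ T \ G₀` already, so avoiding both missed sets also avoids `i`.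
  have hroom : s ≤ (T \ ((T \ G) ∪ (T \ G₀))).card := by
    rw [card_sdiff_of_subset (union_subset sdiff_subset sdiff_subset)]
    have := card_union_le (T \ G) (T \ G₀)
    omega
  obtain ⟨Z, hZ, hZc⟩ := exists_subset_card_eq hroom
  have hZT : Z ⊆ T := hZ.trans sdiff_subset
  have hiZ : i ∉ Z := by
    intro h
    have := hZ h
    simp only [mem_sdiff, mem_union] at this
    tauto
  have hZG : ∀ x ∈ Z, x ∈ G ∧ x ∈ G₀ := by
    intro x hx
    have := hZ hx
    simp only [mem_sdiff, mem_union] at this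
    tauto
  have hD : T \ Z ∈ Fst n t s := by
    rw [mem_Fst]
    refine ⟨?_, ?_⟩
    · intro x hx
      simp only [hT, mem_sdiff, mem_Icc] at hx ⊢
      omega
    · rw [← hT, inter_eq_left.2 sdiff_subset, card_sdiff_of_subset hZT]
      omega
  rcases mem_or_of_mem_Fst hshift hD hij with h | ⟨-, -, h⟩
  · refine key h hG₀ (fun h' => hjT (mem_sdiff.1 h').1) ?_ hmG₀ ?_
    · rw [Finset.sdiff_sdiff_eq_self hZT, hZc]
    · rw [Finset.sdiff_sdiff_eq_self hZT, disjoint_left]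
      intro x hx hx'
      exact (mem_sdiff.1 hx').2 (hZG x hx).2
  · have hmiss : T \ insert j ((T \ Z).erase i) = insert i Z := by
      ext x
      simp only [mem_sdiff, mem_insert, mem_erase]
      grind
    refine key hG h hjG hmG ?_ ?_
    · rw [hmiss, card_insert_of_notMem hiZ, hZc]
    · rw [hmiss, disjoint_right]
      intro x hx hx'
      rcases mem_insert.1 hx with rfl | hx
      · exact (mem_sdiff.1 hx').2 hiG
      · exact (mem_sdiff.1 hx').2 (hZG x hx).1

end

/-- Lemma 6: if `σ_{i,j}(𝒢) = F_s^t` for a 3-wise `t`-intersecting family `𝒢`,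
then `𝒢 ≅ F_s^t`. -/
theorem lemma6 (t s n : ℕ) (ht : 1 ≤ t) (hn : t + 3 * s ≤ n)
    (𝒢 : Finset (Finset ℕ)) (hfam : FamilyOn n 𝒢) (hint : Intersecting3 t 𝒢)
    (i j : ℕ) (hi : 1 ≤ i) (hij : i < j) (hj : j ≤ n)
    (hshift : shiftOp i j 𝒢 = Fst n t s) :
    Isom n 𝒢 (Fst n t s) := by
  by_cases hP : ∀ G ∈ 𝒢, G ∈ Fst n t s
  · have hEq : 𝒢 = Fst n t s := by
      refine Subset.antisymm hP fun H hH => ?_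
      rcases mem_or_of_mem_Fst hshift hH hij with h | ⟨h1, h2, h3⟩
      · exact h
      · have h4 := swap_mem_of_mem_Fst hshift (hP _ h3) (mem_insert_self _ _)
          (by simp [hij.ne])
        rwa [insert_erase_cancel h1 h2] at h4
    refine ⟨Equiv.refl ℕ, fun x hx => hx, ?_⟩
    rw [← hEq]
    simp
  push Not at hP
  obtain ⟨G₀, hG₀, hG₀F⟩ := hP
  obtain ⟨hjG₀, hiG₀, hsw⟩ := (mem_Fst_or hshift hG₀).resolve_left hG₀F
  have hlt : (G₀ ∩ Icc 1 (t + 3 * s)).card < t + 2 * s := by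
    by_contra hc
    exact hG₀F (mem_Fst.2 ⟨hfam _ hG₀, not_lt.1 hc⟩)
  have hge := (mem_Fst.1 hsw).2
  have hiT : i ∈ Icc 1 (t + 3 * s) := by
    by_contra hc
    have : insert i (G₀.erase j) ∩ Icc 1 (t + 3 * s) ⊆ G₀ ∩ Icc 1 (t + 3 * s) := by
      intro x hx
      simp only [mem_inter, mem_insert, mem_erase] at hx ⊢
      grind
    have := card_le_card this
    omega
  have hjT : j ∉ Icc 1 (t + 3 * s) := by
    intro hc
    have h1 : insert i (G₀.erase j) ∩ Icc 1 (t + 3 * s)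
        = insert i ((G₀ ∩ Icc 1 (t + 3 * s)).erase j) := by
      ext x
      simp only [mem_inter, mem_insert, mem_erase]
      grind
    rw [h1, card_insert_of_notMem (by simp [hiG₀]),
      card_erase_of_mem (mem_inter.2 ⟨hjG₀, hc⟩)] at hge
    have : 0 < (G₀ ∩ Icc 1 (t + 3 * s)).card := card_pos.2 ⟨j, mem_inter.2 ⟨hjG₀, hc⟩⟩
    omega
  have hcG₀ : (G₀ ∩ Icc 1 (t + 3 * s)).card + 1 = t + 2 * s := by
    have h1 : insert i (G₀.erase j) ∩ Icc 1 (t + 3 * s)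
        ⊆ insert i (G₀ ∩ Icc 1 (t + 3 * s)) := by
      intro x hx
      simp only [mem_inter, mem_insert, mem_erase] at hx ⊢
      grind
    have h2 := card_le_card h1
    have h3 := card_insert_le i (G₀ ∩ Icc 1 (t + 3 * s))
    omega
  -- Members of `𝒢` containing `i` but not `j` stay in `F_s^t` when `i` is replaced by `j`.
  have hdown : ∀ G ∈ 𝒢, G ∈ Fst n t s → i ∈ G → j ∉ G →
      insert j (G.erase i) ∈ Fst n t s := by
    intro G hG hGF hiG hjG
    obtain ⟨hsub, hcard⟩ := mem_Fst.1 hGF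
    have hne : (G ∩ Icc 1 (t + 3 * s)).card ≠ t + 2 * s := fun hc =>
      false_of_mixed ht hn hint hij hj hshift hiT hjT hG hG₀ hiG hjG hiG₀ hc hcG₀
    rw [mem_Fst]
    refine ⟨?_, ?_⟩
    · intro x hx
      rcases mem_insert.1 hx with rfl | hx
      · exact mem_Icc.2 ⟨by omega, hj⟩
      · exact hsub (mem_of_mem_erase hx)
    · have h1 : (G ∩ Icc 1 (t + 3 * s)).erase i
          ⊆ insert j (G.erase i) ∩ Icc 1 (t + 3 * s) := by
        intro x hx
        simp only [mem_inter, mem_insert, mem_erase] at hx ⊢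
        grind
      have h2 := card_le_card h1
      rw [card_erase_of_mem (mem_inter.2 ⟨hiG, hiT⟩)] at h2
      omega
  have hup : ∀ G ∈ Fst n t s, i ∉ G → j ∈ G → insert i (G.erase j) ∈ Fst n t s := by
    intro G hG hiG hjG
    have h := swap_mem_of_mem_Fst hshift hG hjG hiG
    exact (mem_Fst_or hshift h).resolve_right fun h' => h'.2.1 (mem_insert_self _ _)
  have hswap' : ∀ {G : Finset ℕ}, i ∈ G → j ∉ G →
      G.image (Equiv.swap i j) = insert j (G.erase i) := by
    intro G h1 h2
    rw [Equiv.swap_comm]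
    exact image_swap_eq h1 h2
  refine ⟨Equiv.swap i j, ?_, ?_⟩
  · intro x hx
    rw [mem_Icc] at hx ⊢
    rw [Equiv.swap_apply_def]
    split_ifs <;> omega
  refine Subset.antisymm (fun H hH => ?_) (fun H hH => ?_)
  · rw [mem_image]
    refine ⟨H.image (Equiv.swap i j), ?_, image_swap_image_swap i j H⟩
    rcases mem_or_of_mem_Fst hshift hH hij with h | ⟨h1, h2, h3⟩
    · by_cases hiH : i ∈ H <;> by_cases hjH : j ∈ H
      · rwa [image_swap_eq_self (by tauto)]
      · rw [hswap' hiH hjH]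
        refine (mem_or_of_mem_Fst hshift (hdown H h hH hiH hjH) hij).resolve_right ?_
        exact fun h' => h'.2.1 (mem_insert_self _ _)
      · rw [image_swap_eq hjH hiH]
        exact swap_mem_of_mem_Fst hshift hH hjH hiH
      · rwa [image_swap_eq_self (by tauto)]
    · rwa [hswap' h1 h2]
  · rw [mem_image] at hH
    obtain ⟨G, hG, rfl⟩ := hH
    rcases mem_Fst_or hshift hG with h | ⟨h1, h2, h3⟩
    · by_cases hiG : i ∈ G <;> by_cases hjG : j ∈ G
      · rwa [image_swap_eq_self (by tauto)]
      · rw [hswap' hiG hjG]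
        exact hdown G hG h hiG hjG
      · rw [image_swap_eq hjG hiG]
        exact hup G h hiG hjG
      · rwa [image_swap_eq_self (by tauto)]
    · rwa [image_swap_eq h1 h2]
end

section
/- Let t ≥ 43 be an integer, n ≥ t, and 0 < p ≤ p_0(t). If 𝒢 ⊆ 2^[n] is a 3-wise t-intersecting family, then μ_p(𝒢) ≤ p^t. -/
/-!
A set `G ⊆ [n]` is read as a walk whose `i`-th step goes up if `i ∈ G` and right otherwise, and
`μ_p` becomes the law of a random walk stepping up with probability `p`.

Shifting and up-closure (`exists_shifted`) do not decrease the measure, and they make the family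
closed under passing to walks lying weakly above a given one (`mem_of_dominates`). For such a family
a greedy distribution of misses shows (`exists_few_misses`) that for any three members there is some
`k` such that the three walks make at most `k` right steps in total among their first `t + k` steps.
Everything else uses only this property, called `Crossing`.

Applied to three copies of one member, it says that each walk of the family meets the region on or
above the line `y = 2x + t`. With `β` slightly larger than `p` and `p + (1 - p)β³ ≤ β`, a walk reaches
`y = 2x + u` with probability at most `β^u` (`Pr_hit`), and visits the region twice with probability
at most `β^t (p + (1 - p)β²)` (`Pr_twice`), about `0.51 p^t` at worst. If all members visit twice, this
suffices. Otherwise some member has its only visit at a point `(s, t + 2s)`, and then every member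
with a single visit has it there (`passes_of_dot`).

If `s ≥ 2`, the probability that the first visit is at `(s, t + 2s)` is given by a ballot number; it
is decreasing in `s`, and together with the double visits the total stays below `p^t`
(`numerics_far`). If `s ≤ 1` (`near_case`), either the family is contained in
`F_s = {G : |G ∩ [t + 3s]| ≥ t + 2s}`, whose measure is at most `p^t` (for `s = 1` this is
equivalent to `p ≤ p₀(t)`), or a
member outside `F_s`, chosen as low as possible, excludes a large part of `F_s` (the lost words),
while all members outside `F_s` must reach a line `y = 2x + t + v + 1`. The loss outweighs the gain
(`numerics_zero`, `numerics_one`).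
-/

open Finset

/-! ### Shifting -/

/-- The number of elements of `[j] = {1,…,j}` missing from `G`: the number of horizontal steps
among the first `j` steps of the walk of `G`. -/
def miss (G : Finset ℕ) (j : ℕ) : ℕ := ((Icc 1 j).filter (fun i => i ∉ G)).card

lemma miss_zero (G : Finset ℕ) : miss G 0 = 0 := by simp [miss]

lemma miss_succ (G : Finset ℕ) (j : ℕ) :
    miss G (j + 1) = miss G j + if j + 1 ∈ G then 0 else 1 := by
  have h : Icc 1 (j + 1) = insert (j + 1) (Icc 1 j) := by
    ext x; simp only [mem_Icc, mem_insert]; omega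
  unfold miss
  rw [h, filter_insert]
  by_cases h1 : j + 1 ∈ G
  · simp [h1]
  · rw [if_pos h1, if_neg h1, card_insert_of_notMem (by simp)]

lemma miss_mono (G : Finset ℕ) : Monotone (miss G) :=
  monotone_nat_of_le_succ (fun j => by rw [miss_succ]; omega)

/-- A positive weight on the subsets of `[n]` that grows when an element is replaced by a smaller
one; its total over a family increases under shifting and under adding members. -/
def weight (n : ℕ) (G : Finset ℕ) : ℕ := 1 + ∑ g ∈ G, (n - g)

open Classical in
/-- The `(i, j)`-shift of a member `G` of `𝒢`: `j` is replaced by `i` when that is possible and the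
result is not already in `𝒢`. -/
noncomputable def shiftMem (𝒢 : Finset (Finset ℕ)) (i j : ℕ) (G : Finset ℕ) : Finset ℕ :=
  if j ∈ G ∧ i ∉ G ∧ insert i (G.erase j) ∉ 𝒢 then insert i (G.erase j) else G

lemma shiftMem_injOn (𝒢 : Finset (Finset ℕ)) (i j : ℕ) :
    Set.InjOn (shiftMem 𝒢 i j) 𝒢 := by
  intro G hG H hH h
  simp only [mem_coe] at hG hH
  unfold shiftMem at h
  split_ifs at h with h1 h2 h2
  · have e : ∀ K : Finset ℕ, j ∈ K → i ∉ K →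
        insert j ((insert i (K.erase j)).erase i) = K := by
      intro K hj hi
      rw [erase_insert (by simp [hi]), insert_erase hj]
    rw [← e G h1.1 h1.2.1, h, e H h2.1 h2.2.1]
  · exact absurd (h ▸ hH) h1.2.2
  · exact absurd (h ▸ hG) h2.2.2
  · exact h

lemma shiftMem_card (𝒢 : Finset (Finset ℕ)) (i j : ℕ) (G : Finset ℕ) :
    (shiftMem 𝒢 i j G).card = G.card := by
  unfold shiftMem
  split_ifs with h
  · rw [card_insert_of_notMem (by simp [h.2.1]), card_erase_of_mem h.1]
    have := card_pos.mpr ⟨j, h.1⟩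
    omega
  · rfl

/-- Shifting preserves the 3-wise `t`-intersecting property. -/
lemma shift_intersecting (𝒢 : Finset (Finset ℕ)) (t i j : ℕ) (hij : i ≠ j)
    (hint : Intersecting3 t 𝒢) : Intersecting3 t (𝒢.image (shiftMem 𝒢 i j)) := by
  -- Each shifted set is either a member whose own replacement is blocked, or a new set.
  have key : ∀ A ∈ 𝒢.image (shiftMem 𝒢 i j),
      (A ∈ 𝒢 ∧ (j ∈ A → i ∉ A → insert i (A.erase j) ∈ 𝒢)) ∨
      (i ∈ A ∧ j ∉ A ∧ insert j (A.erase i) ∈ 𝒢) := by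
    intro A hA
    obtain ⟨G, hG, rfl⟩ := mem_image.mp hA
    unfold shiftMem
    split_ifs with h
    · right
      refine ⟨by simp, by simp [hij.symm], ?_⟩
      rw [erase_insert (by simp [h.2.1]), insert_erase h.1]
      exact hG
    · left
      refine ⟨hG, fun h1 h2 => ?_⟩
      by_contra h3
      exact h ⟨h1, h2, h3⟩
  -- Each shifted set `A` has a substitute `H` among the members of `𝒢`, to be used in triples that
  -- contain at least one new set; for a new set it is the member it was shifted from.
  have rep : ∀ A ∈ 𝒢.image (shiftMem 𝒢 i j), ∃ H ∈ 𝒢,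
      (∀ x, x ≠ i → x ≠ j → (x ∈ H → x ∈ A)) ∧ (i ∉ A → j ∉ H) ∧
      ((i ∈ A ∧ j ∉ A ∧ insert j (A.erase i) ∈ 𝒢) → i ∉ H) := by
    intro A hA
    by_cases hn : i ∈ A ∧ j ∉ A ∧ insert j (A.erase i) ∈ 𝒢
    · exact ⟨_, hn.2.2, fun x h1 h2 hx => by simp_all, fun h => absurd hn.1 h,
        fun _ => by simp [hij]⟩
    · obtain ⟨h1, h2⟩ := (key A hA).resolve_right hn
      by_cases h3 : j ∈ A ∧ i ∉ A
      · exact ⟨_, h2 h3.1 h3.2, fun x h1 h2 hx => by simp_all, fun _ => by simp [hij.symm],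
          fun h => absurd h hn⟩
      · exact ⟨A, h1, fun _ _ _ h => h, fun hi hj => h3 ⟨hj, hi⟩, fun h => absurd h hn⟩
  have new : ∀ A ∈ 𝒢.image (shiftMem 𝒢 i j), ∀ B ∈ 𝒢.image (shiftMem 𝒢 i j),
      ∀ C ∈ 𝒢.image (shiftMem 𝒢 i j), (i ∈ A ∧ j ∉ A ∧ insert j (A.erase i) ∈ 𝒢) →
      t ≤ (A ∩ B ∩ C).card := by
    intro A hA B hB C hC hnew
    obtain ⟨A', hA', a1, a2, a3⟩ := rep A hA
    obtain ⟨B', hB', b1, b2, b3⟩ := rep B hB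
    obtain ⟨C', hC', c1, c2, c3⟩ := rep C hC
    have h := hint A' hA' B' hB' C' hC'
    have hi := a3 hnew
    by_cases hall : i ∈ B ∧ i ∈ C
    · -- The intersections agree outside `{i, j}`, and the first one contains `i`.
      refine h.trans (le_trans (card_le_card (t := insert j ((A ∩ B ∩ C).erase i)) ?_) ?_)
      · intro x hx
        simp only [mem_inter, mem_insert, mem_erase] at hx ⊢
        by_cases xj : x = j
        · exact Or.inl xj
        · have xi : x ≠ i := by rintro rfl; exact hi hx.1.1
          exact Or.inr ⟨xi, ⟨a1 x xi xj hx.1.1, b1 x xi xj hx.1.2⟩, c1 x xi xj hx.2⟩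
      · refine (card_insert_le _ _).trans ?_
        have hm : i ∈ A ∩ B ∩ C := by simp [hnew.1, hall.1, hall.2]
        rw [card_erase_of_mem hm]
        have := card_pos.mpr ⟨i, hm⟩
        omega
    · refine h.trans (card_le_card ?_)
      intro x hx
      simp only [mem_inter] at hx ⊢
      have xi : x ≠ i := by rintro rfl; exact hi hx.1.1
      have xj : x ≠ j := by
        rintro rfl
        by_cases hb : i ∈ B
        · exact c2 (fun hc => hall ⟨hb, hc⟩) hx.2
        · exact b2 hb hx.1.2
      exact ⟨⟨a1 x xi xj hx.1.1, b1 x xi xj hx.1.2⟩, c1 x xi xj hx.2⟩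
  intro A hA B hB C hC
  rcases key A hA with h1 | h1
  · rcases key B hB with h2 | h2
    · rcases key C hC with h3 | h3
      · exact hint A h1.1 B h2.1 C h3.1
      · have := new C hC A hA B hB h3
        rwa [inter_assoc, inter_comm] at this
    · have := new B hB A hA C hC h2
      rwa [inter_comm B A] at this
  · exact new A hA B hB C hC h1

/-- Every 3-wise `t`-intersecting family can be replaced by a shifted up-closed one of at least the
same measure: take one of maximal total weight. -/
lemma exists_shifted (p : ℝ) (hp0 : 0 ≤ p) (hp1 : p ≤ 1) (n t : ℕ) (𝒢 : Finset (Finset ℕ))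
    (hfam : FamilyOn n 𝒢) (hint : Intersecting3 t 𝒢) :
    ∃ ℋ : Finset (Finset ℕ), FamilyOn n ℋ ∧ Intersecting3 t ℋ ∧ Shifted n ℋ ∧
      InclMaximal n ℋ ∧ mu p n 𝒢 ≤ mu p n ℋ := by
  classical
  let S : Finset (Finset (Finset ℕ)) := ((Icc 1 n).powerset.powerset).filter
    (fun ℋ => Intersecting3 t ℋ ∧ mu p n 𝒢 ≤ mu p n ℋ)
  have hmem : ∀ ℋ, ℋ ∈ S ↔ FamilyOn n ℋ ∧ Intersecting3 t ℋ ∧ mu p n 𝒢 ≤ mu p n ℋ := by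
    intro ℋ
    simp only [S, mem_filter, mem_powerset, FamilyOn]
    refine and_congr_left (fun _ => ⟨fun h G hG => by simpa using h hG, fun h G hG => ?_⟩)
    simpa using h G hG
  obtain ⟨ℋ, hS, hmax⟩ := exists_max_image S (fun ℋ => ∑ G ∈ ℋ, weight n G)
    ⟨𝒢, (hmem 𝒢).2 ⟨hfam, hint, le_rfl⟩⟩
  obtain ⟨hF, hI, hmu⟩ := (hmem ℋ).1 hS
  refine ⟨ℋ, hF, hI, ?_, ?_, hmu⟩
  · intro i j hi hij hj G hG hjG hiG
    by_contra hcon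
    have hinj := shiftMem_injOn ℋ i j
    have hin : ℋ.image (shiftMem ℋ i j) ∈ S := by
      refine (hmem _).2 ⟨?_, shift_intersecting ℋ t i j hij.ne hI, ?_⟩
      · intro A hA
        obtain ⟨H, hH, rfl⟩ := mem_image.mp hA
        unfold shiftMem
        split_ifs
        · exact insert_subset (mem_Icc.2 ⟨hi, by omega⟩) ((erase_subset _ _).trans (hF H hH))
        · exact hF H hH
      · refine hmu.trans (le_of_eq ?_)
        unfold mu
        rw [sum_image hinj]
        simp only [shiftMem_card]
    have := hmax _ hin
    rw [sum_image hinj] at this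
    have hw : ∀ H : Finset ℕ, j ∈ H → i ∉ H → weight n H < weight n (insert i (H.erase j)) := by
      intro H h1 h2
      unfold weight
      rw [sum_insert (by simp [h2]), ← add_sum_erase _ _ h1]
      omega
    refine absurd this (not_le.2 (sum_lt_sum (fun H _ => ?_) ⟨G, hG, ?_⟩))
    · unfold shiftMem
      split_ifs with h
      · exact (hw H h.1 h.2.1).le
      · exact le_rfl
    · unfold shiftMem
      rw [if_pos ⟨hjG, hiG, hcon⟩]
      exact hw G hjG hiG
  · intro G hG H hGH hH
    by_contra hcon
    have hin : insert H ℋ ∈ S := by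
      refine (hmem _).2 ⟨?_, ?_, ?_⟩
      · intro A hA
        rcases mem_insert.1 hA with rfl | hA
        · exact hH
        · exact hF A hA
      · have hsub : ∀ A ∈ insert H ℋ, ∃ B ∈ ℋ, B ⊆ A := by
          intro A hA
          rcases mem_insert.1 hA with rfl | hA
          · exact ⟨G, hG, hGH⟩
          · exact ⟨A, hA, subset_rfl⟩
        intro A hA B hB C hC
        obtain ⟨A', hA', a⟩ := hsub A hA
        obtain ⟨B', hB', b⟩ := hsub B hB
        obtain ⟨C', hC', c⟩ := hsub C hC
        exact (hI A' hA' B' hB' C' hC').trans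
          (card_le_card (inter_subset_inter (inter_subset_inter a b) c))
      · unfold mu at hmu ⊢
        rw [sum_insert hcon]
        have : 0 ≤ p ^ H.card * (1 - p) ^ (n - H.card) :=
          mul_nonneg (pow_nonneg hp0 _) (pow_nonneg (by linarith) _)
        linarith
    have := hmax _ hin
    rw [sum_insert hcon] at this
    unfold weight at this
    omega

lemma miss_congr {G H : Finset ℕ} {n : ℕ} (hG : G ⊆ Icc 1 n) (hH : H ⊆ Icc 1 n)
    (h : ∀ j ≤ n, miss G j = miss H j) : G = H := by
  ext x
  by_cases hx : 1 ≤ x ∧ x ≤ n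
  · obtain ⟨y, rfl⟩ : ∃ y, x = y + 1 := ⟨x - 1, by omega⟩
    have h1 := h (y + 1) hx.2
    rw [miss_succ, miss_succ, h y (by omega)] at h1
    split_ifs at h1 <;> simp_all
  · exact ⟨fun h => absurd (mem_Icc.1 (hG h)) hx, fun h => absurd (mem_Icc.1 (hH h)) hx⟩

/-- A shifted up-closed family is closed under passing to sets whose walk lies weakly above. -/
lemma mem_of_dominates {n : ℕ} {ℋ : Finset (Finset ℕ)} (hF : FamilyOn n ℋ) (hS : Shifted n ℋ)
    (hM : InclMaximal n ℋ) {G H : Finset ℕ} (hG : G ∈ ℋ) (hH : H ⊆ Icc 1 n)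
    (hdom : ∀ j ≤ n, miss H j ≤ miss G j) : H ∈ ℋ := by
  classical
  -- Among the members whose walk lies weakly below that of `H`, one with the fewest total misses
  -- equals `H`: otherwise a shift or the insertion of an element gives another one with fewer.
  obtain ⟨K, hK, hmin⟩ := exists_min_image
    (ℋ.filter (fun K => ∀ j ≤ n, miss H j ≤ miss K j)) (fun K => ∑ j ∈ range (n + 1), miss K j)
    ⟨G, by simp [hG]; exact hdom⟩
  obtain ⟨hKm, hKd⟩ := mem_filter.1 hK
  suffices K = H by rwa [← this]
  refine miss_congr (hF K hKm) hH ?_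
  by_contra hne
  push Not at hne
  have hex : ∃ j, j ≤ n ∧ miss H j < miss K j := by
    obtain ⟨j, hj, hj'⟩ := hne
    exact ⟨j, hj, lt_of_le_of_ne (hKd j hj) (Ne.symm hj')⟩
  obtain ⟨hj1, hj2⟩ := Nat.find_spec hex
  have hjmin : ∀ i < Nat.find hex, ¬ (i ≤ n ∧ miss H i < miss K i) := fun i hi => Nat.find_min hex hi
  set j := Nat.find hex with hjdef
  have hj0 : j ≠ 0 := by
    intro h0
    rw [h0, miss_zero, miss_zero] at hj2
    omega
  obtain ⟨j', hj'⟩ : ∃ y, j = y + 1 := ⟨j - 1, by omega⟩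
  have hjK : j ∉ K := by
    intro hmem
    have h1 := hjmin j' (by omega)
    rw [hj', miss_succ, miss_succ, ← hj', if_pos hmem] at hj2
    omega
  -- `l` is the next element of `K` after `j`, or `n + 1` if there is none.
  have hexl : ∃ l, j < l ∧ (l ∈ K ∨ l = n + 1) := ⟨n + 1, by omega, Or.inr rfl⟩
  obtain ⟨hl1, hl2⟩ := Nat.find_spec hexl
  have hlmin : ∀ i < Nat.find hexl, ¬ (j < i ∧ (i ∈ K ∨ i = n + 1)) :=
    fun i hi => Nat.find_min hexl hi
  set l := Nat.find hexl with hldef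
  have hln : l ≤ n + 1 := Nat.find_min' hexl ⟨by omega, Or.inr rfl⟩
  have hgap : ∀ i, j ≤ i → i < l → miss H i < miss K i := by
    intro i hi
    induction i, hi using Nat.le_induction with
    | base => exact fun _ => hj2
    | succ i hi ih =>
      intro hil
      have h1 := ih (by omega)
      have h2 : i + 1 ∉ K := fun h => hlmin (i + 1) hil ⟨by omega, Or.inl h⟩
      rw [miss_succ, miss_succ, if_neg h2]
      split_ifs <;> omega
  have hnew : insert j (K.erase l) ∈ ℋ := by
    rcases hl2 with h | h
    · exact hS j l (by omega) hl1 (mem_Icc.1 (hF K hKm h)).2 K hKm h hjK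
    · have : l ∉ K := fun h' => by have := (mem_Icc.1 (hF K hKm h')).2; omega
      rw [erase_eq_of_notMem this]
      exact hM K hKm _ (subset_insert _ _)
        (insert_subset (mem_Icc.2 ⟨by omega, hj1⟩) (hF K hKm))
  have hmiss : ∀ i ≤ n, miss (insert j (K.erase l)) i + (if j ≤ i ∧ i < l then 1 else 0)
      = miss K i := by
    intro i
    induction i with
    | zero => intro _; simp [miss_zero, hj0]
    | succ i ih =>
      intro hi
      have h1 := ih (by omega)
      rw [miss_succ, miss_succ]
      have hm : i + 1 ∈ insert j (K.erase l) ↔ i + 1 = j ∨ (i + 1 ≠ l ∧ i + 1 ∈ K) := by simp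
      by_cases e1 : i + 1 = j
      · have ha : i + 1 ∈ insert j (K.erase l) := hm.2 (Or.inl e1)
        have hb : i + 1 ∉ K := by rw [e1]; exact hjK
        simp only [ha, hb, if_true, if_false]
        split_ifs at h1 ⊢ <;> omega
      · by_cases e2 : i + 1 = l
        · have : l ∈ K := by
            rcases hl2 with h | h
            · exact h
            · omega
          have ha : i + 1 ∉ insert j (K.erase l) :=
            fun h => by rcases hm.1 h with h | h <;> omega
          have hb : i + 1 ∈ K := by rw [e2]; exact this
          simp only [ha, hb, if_true, if_false]
          split_ifs at h1 ⊢ <;> omega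
        · have : i + 1 ∈ insert j (K.erase l) ↔ i + 1 ∈ K := by
            rw [hm]; simp [e1, e2]
          simp only [this]
          have h3 : (j ≤ i + 1 ∧ i + 1 < l) ↔ (j ≤ i ∧ i < l) := by omega
          simp only [h3]
          omega
  have := hmin (insert j (K.erase l)) (mem_filter.2 ⟨hnew, fun i hi => by
    have h1 := hmiss i hi
    have h2 := hKd i hi
    have h3 := hgap i
    split_ifs at h1 with h
    · have := h3 h.1 h.2; omega
    · omega⟩)
  refine absurd this (not_le.2 (sum_lt_sum (fun i hi => ?_) ⟨j, by simp; omega, ?_⟩))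
  · have := hmiss i (by simpa [Nat.lt_succ_iff] using hi)
    omega
  · have := hmiss j hj1
    rw [if_pos ⟨le_rfl, hl1⟩] at this
    omega

/-- If three walks had at least `k + 1` misses in total among the first `t + k` steps for every `k`,
the elements `t, …, n` could be distributed greedily as the misses of three sets whose walks lie
above the given ones, and these sets would meet in at most `t - 1` elements. -/
lemma exists_few_misses {n t : ℕ} (ht : 1 ≤ t) (hn : t ≤ n) {ℋ : Finset (Finset ℕ)}
    (hF : FamilyOn n ℋ) (hI : Intersecting3 t ℋ) (hS : Shifted n ℋ) (hM : InclMaximal n ℋ)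
    {A B C : Finset ℕ} (hA : A ∈ ℋ) (hB : B ∈ ℋ) (hC : C ∈ ℋ) :
    ∃ k, t + k ≤ n ∧ miss A (t + k) + miss B (t + k) + miss C (t + k) ≤ k := by
  by_contra hcon
  push Not at hcon
  let G : Fin 3 → Finset ℕ := ![A, B, C]
  have hG : ∀ i, G i ∈ ℋ := by intro i; fin_cases i <;> simp [G, hA, hB, hC]
  have hsum : ∀ k, t + k ≤ n → k < ∑ i, miss (G i) (t + k) := by
    intro k hk
    simpa [Fin.sum_univ_three, G] using hcon k hk
  have greedy : ∀ k, t + k ≤ n + 1 → ∃ D : Fin 3 → Finset ℕ,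
      (∀ x, t ≤ x → x < t + k → ∃ i, x ∈ D i) ∧ (∀ i, ∀ x ∈ D i, x < t + k) ∧
      (∑ i, (D i).card = k) ∧
      (∀ i, ∀ j, j ≤ n → ((D i).filter (· ≤ j)).card ≤ miss (G i) j) := by
    intro k
    induction k with
    | zero => exact fun _ => ⟨fun _ => ∅, by intro x h h'; omega, by simp, by simp, by simp⟩
    | succ k ih =>
      intro hk
      obtain ⟨D, h1, h2, h3, h4⟩ := ih (by omega)
      obtain ⟨i, -, hi⟩ := exists_lt_of_sum_lt (h3.trans_lt (hsum k (by omega)))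
      have hnot : t + k ∉ D i := fun h => lt_irrefl _ (h2 i _ h)
      refine ⟨Function.update D i (insert (t + k) (D i)), ?_, ?_, ?_, ?_⟩
      · intro x hx hx'
        by_cases e : x = t + k
        · exact ⟨i, by simp [e]⟩
        · obtain ⟨i', hi'⟩ := h1 x hx (by omega)
          refine ⟨i', ?_⟩
          by_cases e' : i' = i
          · subst e'; simp [hi']
          · simpa [Function.update_of_ne e'] using hi'
      · intro i' x hx
        by_cases e' : i' = i
        · subst e'
          simp only [Function.update_self, mem_insert] at hx
          rcases hx with rfl | hx
          · omega
          · have := h2 i' x hx; omega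
        · rw [Function.update_of_ne e'] at hx
          have := h2 i' x hx; omega
      · rw [← add_sum_erase univ (fun i => (D i).card) (mem_univ i)] at h3
        rw [← add_sum_erase univ _ (mem_univ i)]
        have : ∑ x ∈ univ.erase i, (Function.update D i (insert (t + k) (D i)) x).card
            = ∑ x ∈ univ.erase i, (D x).card := by
          refine sum_congr rfl (fun x hx => ?_)
          rw [Function.update_of_ne (ne_of_mem_erase hx)]
        rw [this, Function.update_self, card_insert_of_notMem hnot]
        omega
      · intro i' j hj
        by_cases e' : i' = i
        · subst e'
          rw [Function.update_self, filter_insert]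
          split_ifs with hle
          · refine (card_insert_le _ _).trans ?_
            have := card_le_card (filter_subset (· ≤ j) (D i'))
            have := miss_mono (G i') hle
            omega
          · exact h4 i' j hj
        · rw [Function.update_of_ne e']
          exact h4 i' j hj
  obtain ⟨D, h1, h2, -, h4⟩ := greedy (n + 1 - t) (by omega)
  have hH : ∀ i, Icc 1 n \ D i ∈ ℋ := by
    intro i
    refine mem_of_dominates hF hS hM (hG i) sdiff_subset (fun j hj => ?_)
    refine le_trans (card_le_card ?_) (h4 i j hj)
    intro x hx
    simp only [mem_filter, mem_Icc, mem_sdiff, not_and, not_not] at hx ⊢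
    exact ⟨hx.2 ⟨hx.1.1, by omega⟩, hx.1.2⟩
  have h := hI _ (hH 0) _ (hH 1) _ (hH 2)
  have hle : ((Icc 1 n \ D 0) ∩ (Icc 1 n \ D 1) ∩ (Icc 1 n \ D 2)).card ≤ (Icc 1 (t - 1)).card := by
    refine card_le_card (fun x hx => ?_)
    simp only [mem_inter, mem_sdiff, mem_Icc] at hx ⊢
    by_contra hx'
    obtain ⟨i, hi⟩ := h1 x (by omega) (by omega)
    fin_cases i <;> simp_all
  simp only [Nat.card_Icc] at hle
  omega

/-! ### Random words and their walks -/

open Classical in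
/-- The probability that a random 0-1 word of length `n` satisfies `P`, where the letters are
independent and equal to `true` with probability `p`. A word is read as a walk: `true` is an up
step, `false` a right step. -/
noncomputable def Pr (p : ℝ) : ℕ → (List Bool → Prop) → ℝ
  | 0, P => if P [] then 1 else 0
  | n + 1, P => p * Pr p n (fun l => P (true :: l)) + (1 - p) * Pr p n (fun l => P (false :: l))

/-- The word of a set `G`, whose `i`-th letter tells whether `i ∈ G`, for `a < i ≤ a + n`. -/
def word (G : Finset ℕ) : ℕ → ℕ → List Bool
  | _, 0 => []
  | a, n + 1 => decide (a + 1 ∈ G) :: word G (a + 1) n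

/-- The number of right steps among the first `j` steps. -/
def X (l : List Bool) (j : ℕ) : ℕ := (l.take j).count false

@[simp] lemma X_zero (l : List Bool) : X l 0 = 0 := by simp [X]
@[simp] lemma X_true (l : List Bool) (j : ℕ) : X (true :: l) (j + 1) = X l j := by simp [X]
@[simp] lemma X_false (l : List Bool) (j : ℕ) : X (false :: l) (j + 1) = X l j + 1 := by simp [X]

lemma X_add (l : List Bool) (i j : ℕ) : X l (i + j) = X l i + X (l.drop i) j := by
  simp [X, List.take_add, List.count_append]

lemma X_le (l : List Bool) (j : ℕ) : X l j ≤ j :=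
  List.count_le_length.trans (by simp)

lemma X_mono (l : List Bool) : Monotone (X l) := by
  intro i j hij
  obtain ⟨d, rfl⟩ := Nat.exists_eq_add_of_le hij
  rw [X_add]; omega

lemma word_length (G : Finset ℕ) (a n : ℕ) : (word G a n).length = n := by
  induction n generalizing a with
  | zero => rfl
  | succ n ih => simp [word, ih]

lemma X_word (G : Finset ℕ) (a n j : ℕ) (hj : j ≤ n) :
    miss G (a + j) = miss G a + X (word G a n) j := by
  induction n generalizing a j with
  | zero => obtain rfl : j = 0 := by omega
            simp
  | succ n ih =>
    cases j with
    | zero => simp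
    | succ j =>
      have h := ih (a + 1) j (by omega)
      rw [miss_succ] at h
      rw [show a + (j + 1) = a + 1 + j by ring, h, word]
      by_cases hm : a + 1 ∈ G
      · simp [hm]
      · simp [hm]; ring

section Prob

variable {p : ℝ}

lemma Pr_mono (hp0 : 0 ≤ p) (hp1 : p ≤ 1) {n : ℕ} {P Q : List Bool → Prop}
    (h : ∀ l, l.length = n → P l → Q l) : Pr p n P ≤ Pr p n Q := by
  induction n generalizing P Q with
  | zero =>
    have := h [] rfl
    unfold Pr
    split_ifs <;> simp_all
  | succ n ih =>
    unfold Pr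
    have h1 := ih (P := fun l => P (true :: l)) (Q := fun l => Q (true :: l))
      (fun l hl => h _ (by simp [hl]))
    have h2 := ih (P := fun l => P (false :: l)) (Q := fun l => Q (false :: l))
      (fun l hl => h _ (by simp [hl]))
    have := mul_le_mul_of_nonneg_left h1 hp0
    have := mul_le_mul_of_nonneg_left h2 (sub_nonneg.2 hp1)
    linarith

lemma Pr_congr (hp0 : 0 ≤ p) (hp1 : p ≤ 1) {n : ℕ} {P Q : List Bool → Prop}
    (h : ∀ l, l.length = n → (P l ↔ Q l)) : Pr p n P = Pr p n Q :=
  le_antisymm (Pr_mono hp0 hp1 fun l hl => (h l hl).1) (Pr_mono hp0 hp1 fun l hl => (h l hl).2)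

lemma Pr_true (n : ℕ) : Pr p n (fun _ => True) = 1 := by
  induction n with
  | zero => simp [Pr]
  | succ n ih => simp [Pr, ih]

lemma Pr_false (n : ℕ) : Pr p n (fun _ => False) = 0 := by
  induction n with
  | zero => simp [Pr]
  | succ n ih => simp [Pr, ih]

lemma Pr_nonneg (hp0 : 0 ≤ p) (hp1 : p ≤ 1) (n : ℕ) (P : List Bool → Prop) : 0 ≤ Pr p n P := by
  rw [← Pr_false (p := p) n]
  exact Pr_mono hp0 hp1 (fun _ _ h => h.elim)

lemma Pr_le_one (hp0 : 0 ≤ p) (hp1 : p ≤ 1) (n : ℕ) (P : List Bool → Prop) : Pr p n P ≤ 1 := by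
  rw [← Pr_true (p := p) n]
  exact Pr_mono hp0 hp1 (fun _ _ _ => trivial)

lemma Pr_split (n : ℕ) (P Q : List Bool → Prop) :
    Pr p n P = Pr p n (fun l => P l ∧ Q l) + Pr p n (fun l => P l ∧ ¬ Q l) := by
  induction n generalizing P Q with
  | zero => by_cases h : Q [] <;> by_cases h' : P [] <;> simp [Pr, h, h']
  | succ n ih =>
    simp only [Pr]
    rw [ih (fun l => P (true :: l)) (fun l => Q (true :: l)),
      ih (fun l => P (false :: l)) (fun l => Q (false :: l))]
    ring

lemma Pr_or (hp0 : 0 ≤ p) (hp1 : p ≤ 1) (n : ℕ) (P Q : List Bool → Prop) :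
    Pr p n (fun l => P l ∨ Q l) ≤ Pr p n P + Pr p n Q := by
  rw [Pr_split n (fun l => P l ∨ Q l) P]
  refine add_le_add (Pr_mono hp0 hp1 fun _ _ h => h.2) (Pr_mono hp0 hp1 fun _ _ h => ?_)
  exact h.1.resolve_left h.2

/-- Independence of disjoint blocks of letters. -/
lemma Pr_append (m n : ℕ) (A B : List Bool → Prop) :
    Pr p (m + n) (fun l => A (l.take m) ∧ B (l.drop m)) = Pr p m A * Pr p n B := by
  induction m generalizing A with
  | zero =>
    by_cases h : A []
    · simp [Pr, h]
    · simp [Pr, h, Pr_false]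
  | succ m ih =>
    rw [show m + 1 + n = (m + n) + 1 by ring]
    simp only [Pr, List.take_succ_cons, List.drop_succ_cons]
    rw [ih (fun l => A (true :: l)), ih (fun l => A (false :: l))]
    ring

lemma Pr_all_true (n : ℕ) : Pr p n (fun l => X l n = 0) = p ^ n := by
  induction n with
  | zero => simp [Pr]
  | succ n ih => simp [Pr, ih, Pr_false, pow_succ, mul_comm]

lemma Pr_all_false (hp0 : 0 ≤ p) (hp1 : p ≤ 1) (n : ℕ) :
    Pr p n (fun l => X l n = n) = (1 - p) ^ n := by
  induction n with
  | zero => simp [Pr]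
  | succ n ih =>
    have : Pr p n (fun l => X l n = n + 1) = 0 := by
      rw [← Pr_false (p := p) n]
      exact Pr_congr hp0 hp1 (fun l _ => by have := X_le l n; simp; omega)
    simp [Pr, ih, this, pow_succ, mul_comm]

lemma Pr_one_false (n : ℕ) : Pr p (n + 1) (fun l => X l (n + 1) = 1) =
    (n + 1) * (1 - p) * p ^ n := by
  induction n with
  | zero => simp [Pr]
  | succ n ih =>
    rw [Pr]
    simp only [X_true, X_false, Nat.add_eq_right]
    rw [ih, Pr_all_true]
    push_cast
    ring

/-- A family is bounded in measure by any event satisfied by all its words. -/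
lemma mu_le_Pr (hp0 : 0 ≤ p) (hp1 : p ≤ 1) {n : ℕ} {𝒢 : Finset (Finset ℕ)}
    (hfam : FamilyOn n 𝒢) (P : List Bool → Prop) (hP : ∀ G ∈ 𝒢, P (word G 0 n)) :
    mu p n 𝒢 ≤ Pr p n P := by
  classical
  have key : ∀ (n a : ℕ) (P : List Bool → Prop),
      ∑ G ∈ (Icc (a + 1) (a + n)).powerset,
        (if P (word G a n) then p ^ G.card * (1 - p) ^ (n - G.card) else 0) = Pr p n P := by
    intro n
    induction n with
    | zero =>
      intro a P
      simp [Pr, word]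
    | succ n ih =>
      intro a P
      have hI : Icc (a + 1) (a + (n + 1)) = insert (a + 1) (Icc (a + 1 + 1) (a + 1 + n)) := by
        ext x; simp only [mem_Icc, mem_insert]; omega
      have hnot : a + 1 ∉ Icc (a + 1 + 1) (a + 1 + n) := by simp
      have hcard : ∀ G ∈ (Icc (a + 1 + 1) (a + 1 + n)).powerset, G.card ≤ n := by
        intro G hG
        have := card_le_card (mem_powerset.1 hG)
        simp only [Nat.card_Icc] at this
        omega
      have hword : ∀ (m b : ℕ) (G : Finset ℕ) (c : ℕ), c ≤ b →
          word (insert c G) b m = word G b m := by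
        intro m
        induction m with
        | zero => intros; rfl
        | succ m ihm =>
          intro b G c hc
          have : b + 1 ≠ c := by omega
          simp [word, this, ihm (b + 1) G c (by omega)]
      rw [hI, sum_powerset_insert hnot, Pr, ← ih (a + 1), ← ih (a + 1), mul_sum, mul_sum,
        add_comm]
      congr 1
      · refine sum_congr rfl (fun G hG => ?_)
        have hG' : a + 1 ∉ G := fun h => hnot (mem_powerset.1 hG h)
        have e : word (insert (a + 1) G) a (n + 1) = true :: word G (a + 1) n := by
          simp [word, hword]
        rw [e, card_insert_of_notMem hG', Nat.add_sub_add_right]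
        split_ifs
        · ring
        · simp
      · refine sum_congr rfl (fun G hG => ?_)
        have hG' : a + 1 ∉ G := fun h => hnot (mem_powerset.1 hG h)
        have e : word G a (n + 1) = false :: word G (a + 1) n := by
          simp [word, hG']
        rw [e, Nat.succ_sub (hcard G hG), Nat.succ_eq_add_one]
        split_ifs
        · ring
        · simp
  have h := key n 0 P
  simp only [zero_add] at h
  rw [← h, ← sum_filter]
  refine sum_le_sum_of_subset_of_nonneg (fun G hG => ?_) (fun G _ _ => ?_)
  · exact mem_filter.2 ⟨mem_powerset.2 (hfam G hG), hP G hG⟩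
  · exact mul_nonneg (pow_nonneg hp0 _) (pow_nonneg (sub_nonneg.2 hp1) _)

/-- The walk reaches the line `y = 2x + u`: at some time `j` there are `x` right steps with
`j - 3x ≥ u`. -/
def Hit (u : ℕ) (l : List Bool) : Prop := ∃ j ≤ l.length, u + 3 * X l j ≤ j

/-- The walk is on or above the line `y = 2x + u` at two different times. -/
def Twice (u : ℕ) (l : List Bool) : Prop :=
  ∃ i j, i < j ∧ j ≤ l.length ∧ u + 3 * X l i ≤ i ∧ u + 3 * X l j ≤ j

/-- The walk reaches the line `y = 2x + u` for the first time at the point `(s, u + 2s)`. -/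
def First (u s : ℕ) (l : List Bool) : Prop :=
  u + 3 * s ≤ l.length ∧ X l (u + 3 * s) = s ∧ ∀ j < u + 3 * s, j < u + 3 * X l j

lemma hit_nil (u : ℕ) : Hit (u + 1) [] ↔ False := by
  simp [Hit]

lemma hit_true (u : ℕ) (l : List Bool) (h : Hit (u + 1) (true :: l)) : Hit u l := by
  obtain ⟨j, hj, h⟩ := h
  cases j with
  | zero => simp at h
  | succ j => exact ⟨j, by simpa using hj, by simp at h; omega⟩

lemma hit_false (u : ℕ) (l : List Bool) (h : Hit (u + 1) (false :: l)) : Hit (u + 3) l := by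
  obtain ⟨j, hj, h⟩ := h
  cases j with
  | zero => simp at h
  | succ j => exact ⟨j, by simpa using hj, by simp at h; omega⟩

/-- Any `β ≥ p + (1 - p)β³` bounds the probability of climbing by `1` relative to the slope: a first
step up leaves nothing to climb, a first step right leaves `3`. -/
lemma Pr_hit (hp0 : 0 ≤ p) (hp1 : p ≤ 1) {β : ℝ} (hβ : 0 ≤ β) (hβ' : p + (1 - p) * β ^ 3 ≤ β)
    (n u : ℕ) : Pr p n (Hit u) ≤ β ^ u := by
  induction n generalizing u with
  | zero =>
    cases u with
    | zero => simpa using Pr_le_one hp0 hp1 0 (Hit 0)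
    | succ u => simp [Pr, hit_nil]; positivity
  | succ n ih =>
    cases u with
    | zero => simpa using Pr_le_one hp0 hp1 (n + 1) (Hit 0)
    | succ u =>
      rw [Pr]
      have h1 := (Pr_mono hp0 hp1 (n := n) (fun l _ => hit_true u l)).trans (ih u)
      have h2 := (Pr_mono hp0 hp1 (n := n) (fun l _ => hit_false u l)).trans (ih (u + 3))
      have h3 := mul_le_mul_of_nonneg_left h1 hp0
      have h4 := mul_le_mul_of_nonneg_left h2 (sub_nonneg.2 hp1)
      have h5 := mul_le_mul_of_nonneg_right hβ' (pow_nonneg hβ u)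
      calc _ ≤ p * β ^ u + (1 - p) * β ^ (u + 3) := add_le_add h3 h4
        _ = (p + (1 - p) * β ^ 3) * β ^ u := by ring
        _ ≤ β * β ^ u := h5
        _ = β ^ (u + 1) := by ring

lemma twice_nil (u : ℕ) : Twice u [] ↔ False := by
  simp only [Twice, iff_false]
  rintro ⟨i, j, h1, h2, -⟩
  simp at h2
  omega

lemma twice_true (u : ℕ) (l : List Bool) (h : Twice (u + 1) (true :: l)) : Twice u l := by
  obtain ⟨i, j, hij, hj, h1, h2⟩ := h
  cases i with
  | zero => simp at h1
  | succ i =>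
    cases j with
    | zero => omega
    | succ j => exact ⟨i, j, by omega, by simpa using hj, by simp at h1; omega, by simp at h2; omega⟩

lemma twice_false (u : ℕ) (l : List Bool) (h : Twice (u + 1) (false :: l)) : Twice (u + 3) l := by
  obtain ⟨i, j, hij, hj, h1, h2⟩ := h
  cases i with
  | zero => simp at h1
  | succ i =>
    cases j with
    | zero => omega
    | succ j => exact ⟨i, j, by omega, by simpa using hj, by simp at h1; omega, by simp at h2; omega⟩

lemma twice_zero_false (l : List Bool) (h : Twice 0 (false :: l)) : Hit 2 l := by
  obtain ⟨i, j, hij, hj, h1, h2⟩ := h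
  cases j with
  | zero => omega
  | succ j => exact ⟨j, by simpa using hj, by simp at h2; omega⟩

/-- After the first visit to the line `y = 2x + u`, the walk has to step up, or to step right and
climb by `2` relative to the slope. -/
lemma Pr_twice (hp0 : 0 ≤ p) (hp1 : p ≤ 1) {β : ℝ} (hβ : 0 ≤ β)
    (hβ' : p + (1 - p) * β ^ 3 ≤ β) (n u : ℕ) :
    Pr p n (Twice u) ≤ β ^ u * (p + (1 - p) * β ^ 2) := by
  have hq := sub_nonneg.2 hp1
  induction n generalizing u with
  | zero => simp [Pr, twice_nil]; positivity
  | succ n ih =>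
    rw [Pr]
    cases u with
    | zero =>
      have h1 := Pr_le_one hp0 hp1 n (fun l => Twice 0 (true :: l))
      have h2 := (Pr_mono hp0 hp1 (n := n) (fun l _ => twice_zero_false l)).trans
        (Pr_hit hp0 hp1 hβ hβ' n 2)
      have h3 := mul_le_mul_of_nonneg_left h1 hp0
      have h4 := mul_le_mul_of_nonneg_left h2 hq
      simp only [pow_zero, one_mul]
      linarith
    | succ u =>
      have h1 := (Pr_mono hp0 hp1 (n := n) (fun l _ => twice_true u l)).trans (ih u)
      have h2 := (Pr_mono hp0 hp1 (n := n) (fun l _ => twice_false u l)).trans (ih (u + 3))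
      have h3 := mul_le_mul_of_nonneg_left h1 hp0
      have h4 := mul_le_mul_of_nonneg_left h2 hq
      set r := p + (1 - p) * β ^ 2 with hr
      have hr0 : 0 ≤ r := by positivity
      have h5 := mul_le_mul_of_nonneg_right hβ' (mul_nonneg (pow_nonneg hβ u) hr0)
      calc _ ≤ p * (β ^ u * r) + (1 - p) * (β ^ (u + 3) * r) := add_le_add h3 h4
        _ = (p + (1 - p) * β ^ 3) * (β ^ u * r) := by ring
        _ ≤ β * (β ^ u * r) := h5
        _ = β ^ (u + 1) * r := by ring

/-- The number of walks from the origin that reach the line `y = 2x + u` for the first time at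
`(s, u + 2s)`, that is `u (u+2s+1) ⋯ (u+3s-1) / s!`, as a real number. -/
noncomputable def ballot (u : ℕ) : ℕ → ℝ
  | 0 => 1
  | s + 1 => u * ((u + 2 * s + 3).ascFactorial s : ℝ) / (s + 1).factorial

/-- The recursion for `ballot`, by the first step of the walk. -/
lemma ballot_succ (u s : ℕ) : ballot (u + 1) (s + 1) = ballot u (s + 1) + ballot (u + 3) s := by
  cases s with
  | zero => simp [ballot]
  | succ s =>
    simp only [ballot]
    have e1 : (u + 2 * (s + 1) + 3).ascFactorial (s + 1)
        = (u + 2 * s + 5) * (u + 2 * s + 6).ascFactorial s := by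
      rw [show u + 2 * (s + 1) + 3 = u + 2 * s + 5 by ring, Nat.ascFactorial_succ,
        ← Nat.succ_ascFactorial]
    have e2 : (u + 1 + 2 * (s + 1) + 3).ascFactorial (s + 1)
        = (u + 3 * s + 6) * (u + 2 * s + 6).ascFactorial s := by
      rw [show u + 1 + 2 * (s + 1) + 3 = u + 2 * s + 6 by ring, Nat.ascFactorial_succ]
      ring
    have e3 : (u + 3 + 2 * s + 3) = u + 2 * s + 6 := by ring
    rw [e1, e2, e3, Nat.factorial_succ (s + 1)]
    have : ((s + 1).factorial : ℝ) ≠ 0 := by positivity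
    push_cast
    field_simp
    ring

lemma first_true (u s : ℕ) (l : List Bool) (h : First (u + 1) s (true :: l)) : First u s l := by
  obtain ⟨h1, h2, h3⟩ := h
  rw [show u + 1 + 3 * s = u + 3 * s + 1 by ring] at h1 h2
  refine ⟨by simpa using h1, by simpa using h2, fun j hj => ?_⟩
  have := h3 (j + 1) (by omega)
  simp at this
  omega

lemma first_false (u s : ℕ) (l : List Bool) (h : First (u + 1) (s + 1) (false :: l)) :
    First (u + 3) s l := by
  obtain ⟨h1, h2, h3⟩ := h
  rw [show u + 1 + 3 * (s + 1) = u + 3 + 3 * s + 1 by ring] at h1 h2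
  refine ⟨by simpa using h1, by simpa using h2, fun j hj => ?_⟩
  have := h3 (j + 1) (by omega)
  simp at this
  omega

lemma first_false_zero (u : ℕ) (l : List Bool) (h : First (u + 1) 0 (false :: l)) : False := by
  have := h.2.1
  simp at this

lemma ballot_nonneg (u s : ℕ) : 0 ≤ ballot u s := by
  cases s <;> simp only [ballot] <;> positivity

lemma Pr_first (hp0 : 0 ≤ p) (hp1 : p ≤ 1) (n u s : ℕ) :
    Pr p n (First u s) ≤ ballot u s * p ^ (u + 2 * s) * (1 - p) ^ s := by
  have hq := sub_nonneg.2 hp1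
  have base : ∀ n s, Pr p n (First 0 s) ≤ ballot 0 s * p ^ (0 + 2 * s) * (1 - p) ^ s := by
    intro n s
    cases s with
    | zero => simpa [ballot] using Pr_le_one hp0 hp1 n (First 0 0)
    | succ s =>
      have : Pr p n (First 0 (s + 1)) ≤ Pr p n (fun _ => False) :=
        Pr_mono hp0 hp1 (fun l _ h => by have := h.2.2 0 (by omega); simp at this)
      rw [Pr_false] at this
      simpa [ballot] using this
  induction n generalizing u s with
  | zero =>
    cases u with
    | zero => exact base 0 s
    | succ u =>
      have : ¬ First (u + 1) s [] := by
        intro h; have := h.1; simp at this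
      simp only [Pr, this, if_false]
      have := ballot_nonneg (u + 1) s
      positivity
  | succ n ih =>
    cases u with
    | zero => exact base (n + 1) s
    | succ u =>
      rw [Pr]
      have h1 := mul_le_mul_of_nonneg_left
        ((Pr_mono hp0 hp1 (n := n) (fun l _ => first_true u s l)).trans (ih u s)) hp0
      cases s with
      | zero =>
        have h2 := Pr_mono hp0 hp1 (n := n) (fun l _ => first_false_zero u l)
        rw [Pr_false] at h2
        have h3 := mul_le_mul_of_nonneg_left h2 hq
        simp only [ballot, mul_zero, add_zero, pow_zero, mul_one, one_mul] at h1 h3 ⊢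
        rw [pow_succ]
        linarith
      | succ s =>
        have h2 := mul_le_mul_of_nonneg_left
          ((Pr_mono hp0 hp1 (n := n) (fun l _ => first_false u s l)).trans (ih (u + 3) s)) hq
        refine (add_le_add h1 h2).trans (le_of_eq ?_)
        rw [ballot_succ]
        ring

end Prob

/-! ### Numerical estimates -/

section Numerics

variable {p : ℝ}

/-- An upper bound for the probability `α` of ever climbing by `1` relative to the slope; the
solution `α = p + qα³` equals `p (1 + p² - p³ + ⋯)`. -/
noncomputable def beta (p : ℝ) : ℝ := p * (1 + p ^ 2 * (1 - 3 / 5 * p))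

/-- The number `p₀(t)` is the positive root of `(t + 2)p² = 1 + p`, and `p₀(43) < 0.1606`. The second
inequality is equivalent to `μ_p(F_1) ≤ p^t`. -/
lemma bounds_of_le_p0 {t : ℕ} (ht : 43 ≤ t) (hp : 0 < p) (hpp : p ≤ p0 t) :
    p ≤ 1606 / 10000 ∧ ((t : ℝ) + 2) * p ^ 2 ≤ 1 + p := by
  have htR : (43 : ℝ) ≤ t := by exact_mod_cast ht
  unfold p0 at hpp
  set r := Real.sqrt (4 * t + 9) with hr
  have hr2 : r ^ 2 = 4 * t + 9 := Real.sq_sqrt (by positivity)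
  have hr13 : 134534 / 10000 ≤ r := Real.le_sqrt_of_sq_le (by norm_num; linarith)
  have h := (le_div_iff₀ (by linarith : (0 : ℝ) < r - 1)).1 hpp
  constructor
  · nlinarith
  · have h1 : p * r ≤ 2 + p := by linarith
    have h2 : (p * r) ^ 2 ≤ (2 + p) ^ 2 := pow_le_pow_left₀ (by positivity) h1 2
    rw [mul_pow, hr2] at h2
    nlinarith

lemma beta_pos (hp : 0 < p) (hp1 : p ≤ 1606 / 10000) : 0 < beta p := by
  have : 0 < 1 - 3 / 5 * p := by linarith
  unfold beta
  positivity

lemma excess_le (hp : 0 < p) (hp1 : p ≤ 1606 / 10000) :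
    p ^ 2 * (1 - 3 / 5 * p) ≤ 234 / 10000 := by
  have h2 : 0 ≤ 1606 / 10000 - p := by linarith
  nlinarith [mul_nonneg hp.le h2, mul_nonneg (mul_nonneg hp.le hp.le) h2]

lemma beta_le (hp : 0 < p) (hp1 : p ≤ 1606 / 10000) : beta p ≤ 10234 / 10000 * p := by
  unfold beta
  nlinarith [excess_le hp hp1]

/-- `beta p` satisfies the hypothesis on `β` in `Pr_hit` and `Pr_twice`. -/
lemma beta_super (hp : 0 < p) (hp1 : p ≤ 1606 / 10000) :
    p + (1 - p) * beta p ^ 3 ≤ beta p := by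
  have hb := excess_le hp hp1
  have hd : 0 < 1 - 3 / 5 * p := by linarith
  set b := p ^ 2 * (1 - 3 / 5 * p) with hbdef
  have hb0 : 0 < b := by positivity
  have h3 : (1 + b) ^ 3 ≤ 1 + 308 / 100 * b := by
    nlinarith [mul_nonneg hb0.le (sub_nonneg.2 hb),
      mul_nonneg (mul_nonneg hb0.le hb0.le) (sub_nonneg.2 hb)]
  have h4 : (308 / 100) * (p * ((1 - p) * (1 - 3 / 5 * p))) ≤ 2 / 5 := by
    have h2 : 0 ≤ 1606 / 10000 - p := by linarith
    nlinarith [mul_nonneg hp.le h2, mul_nonneg (mul_nonneg hp.le hp.le) h2]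
  have h5 : (1 - p) * (1 + 308 / 100 * b) ≤ 1 - 3 / 5 * p := by
    have : (1 - p) * (1 + 308 / 100 * b)
        = 1 - p + p * ((308 / 100) * (p * ((1 - p) * (1 - 3 / 5 * p)))) := by
      rw [hbdef]; ring
    rw [this]
    nlinarith
  have h6 : (1 - p) * (1 + b) ^ 3 ≤ 1 - 3 / 5 * p :=
    (mul_le_mul_of_nonneg_left h3 (by linarith)).trans h5
  have h7 := mul_le_mul_of_nonneg_left h6 (by positivity : 0 ≤ p ^ 3)
  have e : beta p = p * (1 + b) := rfl
  rw [e]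
  have : p ^ 3 * (1 - 3 / 5 * p) = p * b := by rw [hbdef]; ring
  nlinarith

lemma ratio_le_exp (hp : 0 < p) (hp1 : p ≤ 1606 / 10000) (t : ℕ) :
    (1 + p ^ 2 * (1 - 3 / 5 * p)) ^ t ≤ Real.exp (t * (p ^ 2 * (1 - 3 / 5 * p))) := by
  have hd : 0 < 1 - 3 / 5 * p := by linarith
  rw [Real.exp_nat_mul]
  refine pow_le_pow_left₀ (by positivity) ?_ t
  have := Real.add_one_le_exp (p ^ 2 * (1 - 3 / 5 * p))
  linarith

/-- The factor by which `β^t` exceeds `p^t` is at most about `e`, since `t p²` is at most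
about `1`. -/
lemma ratio_le (hp : 0 < p) (hp1 : p ≤ 1606 / 10000) (t : ℕ)
    (hT : ((t : ℝ) + 2) * p ^ 2 ≤ 1 + p) :
    (1 + p ^ 2 * (1 - 3 / 5 * p)) ^ t ≤ 2766 / 1000 := by
  refine (ratio_le_exp hp hp1 t).trans ?_
  have h1 : (t : ℝ) * (p ^ 2 * (1 - 3 / 5 * p)) ≤ 1 + 17 / 1000 := by
    have hd : 0 < 1 - 3 / 5 * p := by linarith
    have := mul_le_mul_of_nonneg_right (by linarith : t * p ^ 2 ≤ 1 + p - 2 * p ^ 2) hd.le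
    nlinarith [sq_nonneg (p - 815 / 10000), mul_nonneg hp.le (sq_nonneg (p - 815 / 10000))]
  refine (Real.exp_le_exp.2 h1).trans ?_
  rw [Real.exp_add]
  have h2 : Real.exp (17 / 1000) ≤ 1000 / 983 := by
    have := Real.add_one_le_exp (-(17 / 1000 : ℝ))
    rw [Real.exp_neg] at this
    have h3 := Real.exp_pos (17 / 1000 : ℝ)
    rw [le_inv_comm₀ (by norm_num) h3] at this
    norm_num at this ⊢
    exact this
  have h3 := Real.exp_one_lt_d9
  calc Real.exp 1 * Real.exp (17 / 1000) ≤ 2.7182818286 * (1000 / 983) :=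
        mul_le_mul h3.le h2 (Real.exp_pos _).le (by norm_num)
    _ ≤ _ := by norm_num

lemma ratio_le_two (hp : 0 < p) (hp1 : p ≤ 1606 / 10000) (t : ℕ)
    (hT : (t : ℝ) * p ^ 2 ≤ 68 / 100) :
    (1 + p ^ 2 * (1 - 3 / 5 * p)) ^ t ≤ 2 := by
  refine (ratio_le_exp hp hp1 t).trans ?_
  have h1 : (t : ℝ) * (p ^ 2 * (1 - 3 / 5 * p)) ≤ 68 / 100 := by
    have : 0 ≤ (t : ℝ) * p ^ 2 := by positivity
    nlinarith
  have h2 := Real.log_two_gt_d9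
  calc Real.exp _ ≤ Real.exp (Real.log 2) := Real.exp_le_exp.2 (by linarith)
    _ = 2 := Real.exp_log (by norm_num)

lemma beta_pow (p : ℝ) (t : ℕ) :
    beta p ^ t = p ^ t * (1 + p ^ 2 * (1 - 3 / 5 * p)) ^ t := mul_pow _ _ _

/-- The first-hit probabilities at `(s, t + 2s)` decrease in `s` for `s ≥ 2`. -/
lemma ballot_le (hp : 0 < p) (hp1 : p ≤ 1606 / 10000) (t : ℕ)
    (hT : ((t : ℝ) + 2) * p ^ 2 ≤ 1 + p) (s : ℕ) (hs : 2 ≤ s) :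
    ballot t s * (p ^ 2 * (1 - p)) ^ s ≤ t * (t + 5) / 2 * (p ^ 2 * (1 - p)) ^ 2 := by
  have hq : 0 < 1 - p := by linarith
  set ε := p ^ 2 * (1 - p) with hε
  have hε0 : 0 < ε := by positivity
  have hε1 : ε ≤ 217 / 10000 := by
    have h2 : 0 ≤ 1606 / 10000 - p := by linarith
    nlinarith [mul_nonneg hp.le h2, mul_nonneg (mul_nonneg hp.le hp.le) h2]
  have htε : t * ε ≤ 1 := by
    have := mul_le_mul_of_nonneg_right (by linarith : t * p ^ 2 ≤ 1 + p - 2 * p ^ 2) hq.le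
    nlinarith
  have step : ∀ m : ℕ, 1 ≤ m → ballot t (m + 2) * ε ≤ ballot t (m + 1) := by
    intro m hm
    have hmR : (1 : ℝ) ≤ m := by exact_mod_cast hm
    simp only [ballot]
    have e1 : (t + 2 * m + 3) * (t + 2 * m + 4) * (t + 2 * (m + 1) + 3).ascFactorial (m + 1)
        = (t + 2 * m + 3).ascFactorial m * ((t + 3 * m + 3) * (t + 3 * m + 4) * (t + 3 * m + 5)) := by
      have a1 := Nat.succ_ascFactorial (t + 2 * m + 3) (m + 2)
      have a2 := Nat.succ_ascFactorial (t + 2 * m + 4) (m + 1)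
      simp only [Nat.succ_eq_add_one] at a1 a2
      rw [show t + 2 * m + 4 + 1 = t + 2 * (m + 1) + 3 by ring] at a2
      rw [mul_assoc, a2,
        show t + 2 * m + 4 + (m + 1) = t + 2 * m + 3 + 1 + (m + 1) by ring, ← Nat.ascFactorial_succ,
        Nat.succ_eq_add_one, show m + 1 + 1 = m + 2 by ring, show t + 2 * m + 4 = t + 2 * m + 3 + 1 by ring, a1,
        Nat.ascFactorial_succ, Nat.ascFactorial_succ]
      ring
    have e1R : ((t : ℝ) + 2 * m + 3) * (t + 2 * m + 4) *
        ((t + 2 * (m + 1) + 3).ascFactorial (m + 1) : ℝ)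
        = ((t + 2 * m + 3).ascFactorial m : ℝ) *
          ((t + 3 * m + 3) * (t + 3 * m + 4) * (t + 3 * m + 5)) := by exact_mod_cast e1
    set Y : ℝ := ((t + 2 * (m + 1) + 3).ascFactorial (m + 1) : ℝ)
    set Z : ℝ := ((t + 2 * m + 3).ascFactorial m : ℝ)
    have hZ : 0 ≤ Z := by positivity
    have hfac : (((m + 1 + 1).factorial : ℕ) : ℝ) = (m + 2) * ((m + 1).factorial : ℝ) := by
      rw [Nat.factorial_succ]; push_cast; ring
    rw [hfac]
    have hf : (0 : ℝ) < ((m + 1).factorial : ℝ) := by positivity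
    have h1 : ε * ((t : ℝ) + 3 * m + 3) * (9 / 4) ≤ m + 2 := by nlinarith
    have h2 : ε * (((t : ℝ) + 3 * m + 3) * (t + 3 * m + 4) * (t + 3 * m + 5))
        ≤ (m + 2) * (((t : ℝ) + 2 * m + 3) * (t + 2 * m + 4)) := by
      have b1 : ((t : ℝ) + 3 * m + 4) ≤ 3 / 2 * (t + 2 * m + 3) := by nlinarith
      have b2 : ((t : ℝ) + 3 * m + 5) ≤ 3 / 2 * (t + 2 * m + 4) := by nlinarith
      have b3 := mul_le_mul b1 b2 (by positivity) (by positivity)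
      calc _ = ε * ((t : ℝ) + 3 * m + 3) * ((t + 3 * m + 4) * (t + 3 * m + 5)) := by ring
        _ ≤ ε * ((t : ℝ) + 3 * m + 3) * (3 / 2 * (t + 2 * m + 3) * (3 / 2 * (t + 2 * m + 4))) :=
            mul_le_mul_of_nonneg_left b3 (by positivity)
        _ = (ε * ((t : ℝ) + 3 * m + 3) * (9 / 4)) * ((t + 2 * m + 3) * (t + 2 * m + 4)) := by ring
        _ ≤ _ := mul_le_mul_of_nonneg_right h1 (by positivity)
    have h3 : Y * ε ≤ Z * (m + 2) := by
      have hpos : 0 < ((t : ℝ) + 2 * m + 3) * (t + 2 * m + 4) := by positivity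
      refine le_of_mul_le_mul_left ?_ hpos
      calc _ = (((t : ℝ) + 2 * m + 3) * (t + 2 * m + 4) * Y) * ε := by ring
        _ = Z * (ε * ((t + 3 * m + 3) * (t + 3 * m + 4) * (t + 3 * m + 5))) := by rw [e1R]; ring
        _ ≤ Z * ((m + 2) * (((t : ℝ) + 2 * m + 3) * (t + 2 * m + 4))) :=
            mul_le_mul_of_nonneg_left h2 hZ
        _ = _ := by ring
    rw [div_mul_eq_mul_div, div_le_div_iff₀ (by positivity) hf]
    calc (t : ℝ) * Y * ε * ((m + 1).factorial : ℝ) = t * ((m + 1).factorial : ℝ) * (Y * ε) := by ring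
      _ ≤ t * ((m + 1).factorial : ℝ) * (Z * (m + 2)) :=
          mul_le_mul_of_nonneg_left h3 (by positivity)
      _ = _ := by ring
  induction s, hs using Nat.le_induction with
  | base =>
    have : ballot t 2 = t * (t + 5) / 2 := by
      simp only [ballot, Nat.ascFactorial, Nat.factorial]
      push_cast
      ring
    rw [this]
  | succ s hs ih =>
    obtain ⟨m, rfl⟩ : ∃ m, s = m + 1 := ⟨s - 1, by omega⟩
    have := mul_le_mul_of_nonneg_right (step m (by omega)) (pow_nonneg hε0.le (m + 1))
    refine le_trans (le_of_eq ?_) (this.trans ih)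
    rw [show m + 1 + 1 = m + 2 by ring]
    ring

/-- In units of `p^t`: a first visit at `(s, t + 2s)` with `s ≥ 2`, or two visits, has probability at
most `1`. -/
lemma numerics_far (hp : 0 < p) (hp1 : p ≤ 1606 / 10000) (t : ℕ)
    (hT : ((t : ℝ) + 2) * p ^ 2 ≤ 1 + p) :
    (t : ℝ) * (t + 5) / 2 * (p ^ 2 * (1 - p)) ^ 2 +
      2766 / 1000 * (p + (1 - p) * beta p ^ 2) ≤ 1 := by
  have hq : 0 < 1 - p := by linarith
  have hb : beta p ^ 2 ≤ 105 / 100 * p ^ 2 := by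
    have := pow_le_pow_left₀ (beta_pos hp hp1).le (beta_le hp hp1) 2
    nlinarith [sq_nonneg p]
  have h1 : (t : ℝ) * (t + 5) * p ^ 4 ≤ (1 + p) ^ 2 + p ^ 2 * (1 + p) := by
    have a : ((t + 2 : ℝ) * p ^ 2) ^ 2 ≤ (1 + p) ^ 2 := pow_le_pow_left₀ (by positivity) hT 2
    have b := mul_le_mul_of_nonneg_left hT (sq_nonneg p)
    have c : 0 ≤ p ^ 4 := by positivity
    nlinarith
  have h2 : (t : ℝ) * (t + 5) / 2 * (p ^ 2 * (1 - p)) ^ 2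
      ≤ ((1 + p) ^ 2 + p ^ 2 * (1 + p)) * (1 - p) ^ 2 / 2 := by
    have := mul_le_mul_of_nonneg_right h1 (sq_nonneg (1 - p))
    nlinarith
  have h3 := mul_le_mul_of_nonneg_left hb hq.le
  have h4 : ((1 + p) ^ 2 + p ^ 2 * (1 + p)) * (1 - p) ^ 2 / 2 +
      2766 / 1000 * (p + (1 - p) * (105 / 100 * p ^ 2)) ≤ 1 := by
    have h2 : 0 ≤ 1606 / 10000 - p := by linarith
    nlinarith [mul_nonneg hp.le h2, mul_nonneg (mul_nonneg hp.le hp.le) h2,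
      mul_nonneg (mul_nonneg (mul_nonneg hp.le hp.le) hp.le) h2, pow_pos hp 3, pow_pos hp 4,
      pow_pos hp 5]
  linarith

lemma beta_le_const (hp : 0 < p) (hp1 : p ≤ 1606 / 10000) : beta p ≤ 165 / 1000 := by
  have := beta_le hp hp1
  linarith

lemma one_sub_beta_sq (hp : 0 < p) (hp1 : p ≤ 1606 / 10000) :
    972 / 1000 ≤ 1 - beta p ^ 2 := by
  have := beta_le_const hp hp1
  have := beta_pos hp hp1
  nlinarith

lemma beta_pow_le (hp : 0 < p) (hp1 : p ≤ 1606 / 10000) (v : ℕ) :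
    beta p ^ (v + 1) ≤ beta p * (1 - p) ^ v := by
  have h1 := beta_le_const hp hp1
  have h0 := beta_pos hp hp1
  rw [pow_succ, mul_comm]
  exact mul_le_mul_of_nonneg_left (pow_le_pow_left₀ h0.le (by linarith) v) h0.le

/-- In units of `p^t`, for `s = 0`: the words reaching `y = 2x + t + v + 1` weigh no more than the lost
words of `F_0`. -/
lemma numerics_zero (hp : 0 < p) (hp1 : p ≤ 1606 / 10000) (t v : ℕ)
    (hT : ((t : ℝ) + 2) * p ^ 2 ≤ 1 + p) :
    (1 + p ^ 2 * (1 - 3 / 5 * p)) ^ t * beta p ^ (v + 1)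
      ≤ (1 - p) ^ (v + 1) * (1 - beta p ^ 2) := by
  have hq : 0 < 1 - p := by linarith
  have h0 := beta_pos hp hp1
  have h1 := beta_le_const hp hp1
  have h2 := one_sub_beta_sq hp hp1
  calc _ ≤ 2766 / 1000 * (beta p * (1 - p) ^ v) :=
        mul_le_mul (ratio_le hp hp1 t hT) (beta_pow_le hp hp1 v) (by positivity) (by norm_num)
    _ = (1 - p) ^ v * (2766 / 1000 * beta p) := by ring
    _ ≤ (1 - p) ^ v * ((1 - p) * (1 - beta p ^ 2)) :=
        mul_le_mul_of_nonneg_left (by nlinarith) (by positivity)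
    _ = _ := by ring

/-- In units of `p^t`: the measure of `F_1`, minus that of the lost words, plus that of the words
reaching `y = 2x + t + v + 1`, is at most `1`. When `t p² ≤ 0.68` the measure of `F_1` is small enough
to ignore the loss; otherwise the loss outweighs the gain. -/
lemma numerics_one (hp : 0 < p) (hp1 : p ≤ 1606 / 10000) (t v : ℕ)
    (hT : ((t : ℝ) + 2) * p ^ 2 ≤ 1 + p) :
    ((t : ℝ) + 3) * (1 - p) * p ^ 2 + p ^ 3
      - ((t : ℝ) + 1) * (1 - p) * p ^ 2 * ((1 - p) ^ (v + 1) * (1 - beta p ^ 2))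
      + (1 + p ^ 2 * (1 - 3 / 5 * p)) ^ t * beta p ^ (v + 1) ≤ 1 := by
  have hq : 0 < 1 - p := by linarith
  have h0 := beta_pos hp hp1
  have h1 := beta_le_const hp hp1
  have h2 := one_sub_beta_sq hp hp1
  have hd : 0 < 1 - 3 / 5 * p := by linarith
  have hv := beta_pow_le hp hp1 v
  rcases le_total ((t : ℝ) * p ^ 2) (68 / 100) with hc | hc
  · have a1 : (1 + p ^ 2 * (1 - 3 / 5 * p)) ^ t * beta p ^ (v + 1) ≤ 2 * beta p := by
      refine mul_le_mul (ratio_le_two hp hp1 t hc) (hv.trans ?_) (by positivity) (by norm_num)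
      have := pow_le_one₀ (n := v) hq.le (by linarith)
      nlinarith
    have a2 : 0 ≤ ((t : ℝ) + 1) * (1 - p) * p ^ 2 * ((1 - p) ^ (v + 1) * (1 - beta p ^ 2)) := by
      have : 0 ≤ 1 - beta p ^ 2 := by linarith
      positivity
    have a3 : ((t : ℝ) + 3) * (1 - p) * p ^ 2 ≤ (68 / 100 + 3 * p ^ 2) * (1 - p) := by
      nlinarith [mul_le_mul_of_nonneg_right hc hq.le]
    have a4 := beta_le hp hp1
    have a5 : (68 / 100 + 3 * p ^ 2) * (1 - p) + p ^ 3 + 2 * (10234 / 10000 * p) ≤ 1 := by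
      have h2 : 0 ≤ 1606 / 10000 - p := by linarith
      nlinarith [mul_nonneg hp.le h2, mul_nonneg (mul_nonneg hp.le hp.le) h2, pow_pos hp 3]
    linarith
  · have a1 : ((t : ℝ) + 3) * (1 - p) * p ^ 2 + p ^ 3 ≤ 1 := by
      nlinarith [mul_le_mul_of_nonneg_right hT hq.le]
    have a2 : (1 + p ^ 2 * (1 - 3 / 5 * p)) ^ t * beta p ^ (v + 1)
        ≤ (1 - p) ^ v * (4564 / 10000) := by
      calc _ ≤ 2766 / 1000 * (beta p * (1 - p) ^ v) :=
            mul_le_mul (ratio_le hp hp1 t hT) hv (by positivity) (by norm_num)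
        _ = (1 - p) ^ v * (2766 / 1000 * beta p) := by ring
        _ ≤ _ := mul_le_mul_of_nonneg_left (by linarith) (by positivity)
    have a3 : (4564 / 10000 : ℝ) ≤
        ((t : ℝ) + 1) * p ^ 2 * ((1 - p) ^ 2 * (1 - beta p ^ 2)) := by
      have b1 : (8394 / 10000 : ℝ) ^ 2 ≤ (1 - p) ^ 2 :=
        pow_le_pow_left₀ (by norm_num) (by linarith) 2
      have b2 := mul_le_mul b1 h2 (by norm_num) (by positivity)
      have b3 : (68 / 100 : ℝ) ≤ (t + 1) * p ^ 2 := by nlinarith [sq_nonneg p]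
      have b4 := mul_le_mul b3 b2 (by norm_num) (by positivity)
      refine le_trans (by norm_num) b4
    have a4 := mul_le_mul_of_nonneg_left a3 (pow_nonneg hq.le v)
    have a5 : (1 - p) ^ v * (((t : ℝ) + 1) * p ^ 2 * ((1 - p) ^ 2 * (1 - beta p ^ 2)))
        = ((t : ℝ) + 1) * (1 - p) * p ^ 2 * ((1 - p) ^ (v + 1) * (1 - beta p ^ 2)) := by ring
    linarith

end Numerics

/-! ### Families with the crossing property -/

section Main

variable {p : ℝ}

/-- The walk is on or above the line `y = 2x + t` at exactly one of the times `0, …, n`, namely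
when it passes through `(s, t + 2s)`. -/
def Dot (n t s : ℕ) (l : List Bool) : Prop :=
  t + 3 * s ≤ n ∧ X l (t + 3 * s) = s ∧ ∀ j ≤ n, j ≠ t + 3 * s → j < t + 3 * X l j

/-- The property of shifted families (in terms of words of length `n`) to which the whole argument
reduces: any three words have, for some `k`, at most `k` right steps in total among their first
`t + k` steps. -/
def Crossing (n t : ℕ) (S : List Bool → Prop) : Prop :=
  (∀ l, S l → l.length = n) ∧ ∀ l₁ l₂ l₃, S l₁ → S l₂ → S l₃ →
    ∃ k, t + k ≤ n ∧ X l₁ (t + k) + X l₂ (t + k) + X l₃ (t + k) ≤ k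

/-- Three copies of one word show that it visits the region `y ≥ 2x + t` at least once; a single visit
lies on the line itself. -/
lemma dot_of_not_twice {n t : ℕ} {S : List Bool → Prop} (hS : Crossing n t S) {l : List Bool}
    (hl : S l) (ht : 1 ≤ t) (h : ¬ Twice t l) : ∃ s, Dot n t s l := by
  have hlen := hS.1 l hl
  obtain ⟨k, hk, hX⟩ := hS.2 l l l hl hl hl
  have huniq : ∀ j ≤ n, j ≠ t + k → j < t + 3 * X l j := by
    intro j hj hne
    by_contra hcon
    push Not at hcon
    rcases lt_or_gt_of_ne hne with h' | h'
    · exact h ⟨j, t + k, h', by omega, hcon, by omega⟩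
    · exact h ⟨t + k, j, h', by omega, by omega, hcon⟩
  have h1 := huniq (t + k - 1) (by omega) (by omega)
  have h2 := X_mono l (Nat.sub_le (t + k) 1)
  have h3 : k = 3 * X l (t + k) := by omega
  refine ⟨X l (t + k), by omega, ?_, fun j hj hne => huniq j hj (by omega)⟩
  rw [← h3]

lemma first_of_dot {n t s : ℕ} {l : List Bool} (hl : l.length = n) (h : Dot n t s l) :
    First t s l :=
  ⟨by rw [hl]; exact h.1, h.2.1, fun j hj => h.2.2 j (by have := h.1; omega) (by omega)⟩

/-- A word of the family staying weakly below `y = 2x + t` must pass through the point at which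
some word of the family has its only visit. -/
lemma passes_of_dot {n t s : ℕ} {S : List Bool → Prop} (hS : Crossing n t S) {l₀ l : List Bool}
    (h₀ : S l₀) (hd : Dot n t s l₀) (hl : S l) (hlow : ∀ j ≤ n, j ≤ t + 3 * X l j) :
    X l (t + 3 * s) ≤ s := by
  by_contra hcon
  obtain ⟨k, hk, hX⟩ := hS.2 l₀ l₀ l h₀ h₀ hl
  have h1 := hlow (t + k) hk
  by_cases e : k = 3 * s
  · subst e
    have := hd.2.1
    omega
  · have := hd.2.2 (t + k) hk (by omega)
    omega

/-- The words of `F_s` that are lost: `s` right steps among the first `t + s` steps, then `2s` up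
steps, then `m` right steps, after which the walk never climbs by `2` relative to the slope. -/
def Lost (t s m : ℕ) (l : List Bool) : Prop :=
  X (l.take (t + s)) (t + s) = s ∧ (fun l' : List Bool => X (l'.take (2 * s)) (2 * s) = 0 ∧
    (fun l'' : List Bool => X (l''.take m) m = m ∧ ¬ Hit 2 (l''.drop m)) (l'.drop (2 * s)))
    (l.drop (t + s))

lemma X_take (l : List Bool) (j : ℕ) : X (l.take j) j = X l j := by
  unfold X
  rw [List.take_take, min_self]

/-- The last conjunct says that the walk of a lost word stays weakly below the line of slope `2` one
unit above its position at time `t + 3s + m`. -/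
lemma lost_facts {n t s m : ℕ} {l : List Bool} (hl : l.length = n) (h : Lost t s m l) :
    X l (t + s) = s ∧ X l (t + 3 * s) = s ∧ X l (t + 3 * s + m) = s + m ∧
      ∀ j ≤ n, t + 3 * s + m ≤ j → j + 3 * s + 3 * m ≤ t + 3 * s + m + 1 + 3 * X l j := by
  obtain ⟨h1, h2, h3, h4⟩ := h
  simp only [X_take] at h1 h2 h3
  simp only [List.drop_drop] at h3 h4
  rw [show t + s + 2 * s = t + 3 * s by ring] at h3 h4
  have e1 : X l (t + 3 * s) = s := by
    rw [show t + 3 * s = t + s + 2 * s by ring, X_add, h1, h2]; rfl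
  have e2 : X l (t + 3 * s + m) = s + m := by rw [X_add, e1, h3]
  refine ⟨h1, e1, e2, fun j hj hj' => ?_⟩
  obtain ⟨d, rfl⟩ := Nat.exists_eq_add_of_le hj'
  have : ¬ (2 + 3 * X (l.drop (t + 3 * s + m)) d ≤ d) := fun hc =>
    h4 ⟨d, by rw [List.length_drop]; omega, hc⟩
  rw [X_add, e2]
  omega

lemma Pr_lost (hp0 : 0 ≤ p) (hp1 : p ≤ 1) {β : ℝ} (hβ : 0 ≤ β)
    (hβ' : p + (1 - p) * β ^ 3 ≤ β) (t s m r : ℕ) :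
    Pr p (t + s) (fun l => X l (t + s) = s) * p ^ (2 * s) * ((1 - p) ^ m * (1 - β ^ 2))
      ≤ Pr p (t + s + (2 * s + (m + r))) (Lost t s m) := by
  have hq := sub_nonneg.2 hp1
  have hnot : 1 - β ^ 2 ≤ Pr p r (fun l => ¬ Hit 2 l) := by
    have h1 := Pr_split (p := p) r (fun _ => True) (Hit 2)
    have h2 := Pr_hit hp0 hp1 hβ hβ' r 2
    simp only [true_and, Pr_true] at h1
    linarith
  have e : Pr p (t + s + (2 * s + (m + r))) (Lost t s m)
      = Pr p (t + s) (fun l => X l (t + s) = s) * (p ^ (2 * s) * ((1 - p) ^ m *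
        Pr p r (fun l => ¬ Hit 2 l))) := by
    have a1 := Pr_append (p := p) m r (fun l => X l m = m) (fun l => ¬ Hit 2 l)
    have a2 := Pr_append (p := p) (2 * s) (m + r) (fun l => X l (2 * s) = 0)
      (fun l => X (l.take m) m = m ∧ ¬ Hit 2 (l.drop m))
    have a3 := Pr_append (p := p) (t + s) (2 * s + (m + r)) (fun l => X l (t + s) = s)
      (fun l => X (l.take (2 * s)) (2 * s) = 0 ∧
        X ((l.drop (2 * s)).take m) m = m ∧ ¬ Hit 2 ((l.drop (2 * s)).drop m))
    rw [Pr_all_false hp0 hp1] at a1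
    rw [Pr_all_true, a1] at a2
    rw [a2] at a3
    exact a3
  rw [e, mul_assoc]
  have := Pr_nonneg hp0 hp1 (t + s) (fun l => X l (t + s) = s)
  gcongr

lemma Pr_prefix (hp0 : 0 ≤ p) (hp1 : p ≤ 1) (m r : ℕ) (Q : ℕ → Prop) :
    Pr p (m + r) (fun l => Q (X l m)) = Pr p m (fun l => Q (X l m)) := by
  have := Pr_append (p := p) m r (fun l => Q (X l m)) (fun _ => True)
  rw [Pr_true, mul_one] at this
  rw [← this]
  exact Pr_congr hp0 hp1 (fun l _ => by simp [X_take])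

/-- If the only visit of some word is at `(s, t + 2s)` with `s ≤ 1`, then either the family is
contained in `F_s`, or a word outside `F_s` excludes all lost words from the family. In the latter
case that word is taken as low as possible, so that all words outside `F_s` reach the line
`y = 2x + t + v + 1`. -/
lemma near_case {n t s : ℕ} {S : List Bool → Prop} (hS : Crossing n t S) {l₀ : List Bool}
    (h₀ : S l₀) (hd : Dot n t s l₀) (hs : s ≤ 1) :
    (∀ l, S l → X l (t + 3 * s) ≤ s) ∨
    ∃ v m, m ≤ v + 1 ∧ t + 3 * s + m ≤ n ∧
      ∀ l, S l → (X l (t + 3 * s) ≤ s ∧ ¬ Lost t s m l) ∨ Hit (t + (v + 1)) l := by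
  classical
  by_cases hall : ∀ l, S l → X l (t + 3 * s) ≤ s
  · exact Or.inl hall
  right
  push Not at hall
  obtain ⟨l₁, hl₁, hX₁⟩ := hall
  have hn := hd.1
  have hex : ∃ v, ∃ l, S l ∧ s < X l (t + 3 * s) ∧ ¬ Hit (t + v + 1) l := by
    refine ⟨n, l₁, hl₁, hX₁, ?_⟩
    rintro ⟨j, hj, h⟩
    have := hS.1 l₁ hl₁
    omega
  obtain ⟨ls, hls, hXs, hhit⟩ := Nat.find_spec hex
  have hmin : ∀ w < Nat.find hex, ∀ l, S l → s < X l (t + 3 * s) → Hit (t + w + 1) l := by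
    intro w hw l hl hX
    by_contra hcon
    exact Nat.find_min hex hw ⟨l, hl, hX, hcon⟩
  set u := Nat.find hex
  have hlens := hS.1 ls hls
  have hlow : ∀ j ≤ n, j ≤ t + u + 3 * X ls j := by
    intro j hj
    by_contra hcon
    exact hhit ⟨j, by omega, by omega⟩
  have hu : u ≠ 0 := by
    intro hu
    have := passes_of_dot hS h₀ hd hls (fun j hj => by have := hlow j hj; omega)
    omega
  obtain ⟨v, hv⟩ : ∃ v, u = v + 1 := ⟨u - 1, by omega⟩
  refine ⟨v, min (v + 1) (n - (t + 3 * s)), min_le_left _ _, ?_, ?_⟩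
  · have := min_le_right (v + 1) (n - (t + 3 * s))
    omega
  intro l hl
  by_cases hX : X l (t + 3 * s) ≤ s
  · left
    refine ⟨hX, fun hL => ?_⟩
    obtain ⟨f1, f2, f3, f4⟩ := lost_facts (hS.1 l hl) hL
    set m := min (v + 1) (n - (t + 3 * s)) with hm
    obtain ⟨k, hk, hsum⟩ := hS.2 l₀ ls l h₀ hls hl
    have g0 := hd.2.1
    have g1 : k ≠ 3 * s → t + k < t + 3 * X l₀ (t + k) := fun h => hd.2.2 (t + k) hk (by omega)
    have g2 := hlow (t + k) hk
    have g3 := f4 (t + k) hk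
    -- On the stretch of `m` right steps the count of right steps grows by one at each time.
    have g4 : k ≤ 3 * s + m → 3 * s ≤ k → s + (k - 3 * s) ≤ X l (t + k) := by
      intro h1 h2
      have := X_add l (t + k) (3 * s + m - k)
      rw [show t + k + (3 * s + m - k) = t + 3 * s + m by omega, f3] at this
      have := X_le (l.drop (t + k)) (3 * s + m - k)
      omega
    have g5 : 3 * s ≤ k → s < X ls (t + k) := fun h =>
      lt_of_lt_of_le hXs (X_mono ls (by omega))
    have g6 : k = 3 * s → X l₀ (t + k) = s := fun h => by rw [h]; exact g0
    have a1 : k + 1 = 3 * s → s ≤ X ls (t + k) := by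
      intro h
      have h1 := X_add ls (t + k) 1
      have h2 := X_le (ls.drop (t + k)) 1
      rw [show t + k + 1 = t + 3 * s by omega] at h1
      omega
    have a2 : s ≤ k → s ≤ X l (t + k) := fun h => by
      have := X_mono l (show t + s ≤ t + k by omega)
      omega
    rcases Nat.le_one_iff_eq_zero_or_eq_one.1 hs with e | e <;> omega
  · right
    have := hmin v (by omega) l hl (by omega)
    exact this

/-- The random-word form of the theorem. -/
lemma Pr_crossing {n t : ℕ} (ht : 43 ≤ t) (hp : 0 < p) (hp1 : p ≤ 1606 / 10000)
    (hT : ((t : ℝ) + 2) * p ^ 2 ≤ 1 + p) {S : List Bool → Prop} (hS : Crossing n t S) :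
    Pr p n S ≤ p ^ t := by
  have hp0 := hp.le
  have hp1' : p ≤ 1 := by linarith
  have hq : 0 < 1 - p := by linarith
  have hβ := (beta_pos hp hp1).le
  have hβ' := beta_super hp hp1
  have hpt : 0 < p ^ t := by positivity
  have htw : Pr p n (Twice t) ≤ p ^ t * (2766 / 1000 * (p + (1 - p) * beta p ^ 2)) := by
    refine (Pr_twice hp0 hp1' hβ hβ' n t).trans ?_
    rw [beta_pow, mul_assoc]
    refine mul_le_mul_of_nonneg_left (mul_le_mul_of_nonneg_right (ratio_le hp hp1 t hT) ?_) hpt.le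
    positivity
  have hfar := numerics_far hp hp1 t hT
  by_cases hdot : ∃ s l₀, S l₀ ∧ Dot n t s l₀
  swap
  · have h1 : Pr p n S ≤ Pr p n (Twice t) := Pr_mono hp0 hp1' fun l _ hl => by
      by_contra hcon
      obtain ⟨s, hs⟩ := dot_of_not_twice hS hl (by omega) hcon
      exact hdot ⟨s, l, hl, hs⟩
    refine h1.trans (htw.trans ?_)
    have : 0 ≤ (t : ℝ) * (t + 5) / 2 * (p ^ 2 * (1 - p)) ^ 2 := by positivity
    exact mul_le_of_le_one_right hpt.le (by linarith)
  obtain ⟨s, l₀, h₀, hd⟩ := hdot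
  rcases Nat.lt_or_ge 1 s with hs | hs
  · have h1 : Pr p n S ≤ Pr p n (fun l => First t s l ∨ Twice t l) :=
      Pr_mono hp0 hp1' fun l hlen hl => by
        by_cases hcon : Twice t l
        · exact Or.inr hcon
        left
        obtain ⟨s', hs'⟩ := dot_of_not_twice hS hl (by omega) hcon
        have h2 := passes_of_dot hS h₀ hd hl (fun j hj => by
          by_cases e : j = t + 3 * s'
          · rw [e, hs'.2.1]
          · exact (hs'.2.2 j hj e).le)
        have : s' = s := by
          by_contra hne
          have := hs'.2.2 (t + 3 * s) hd.1 (by omega)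
          omega
        subst this
        exact first_of_dot hlen hs'
    have h2 := Pr_first hp0 hp1' n t s
    have h3 := ballot_le hp hp1 t hT s hs
    have h4 : ballot t s * p ^ (t + 2 * s) * (1 - p) ^ s
        = p ^ t * (ballot t s * (p ^ 2 * (1 - p)) ^ s) := by
      rw [mul_pow, ← pow_mul, pow_add]; ring
    rw [h4] at h2
    have h5 := mul_le_mul_of_nonneg_left h3 hpt.le
    have h6 := mul_le_mul_of_nonneg_left hfar hpt.le
    have h7 := Pr_or hp0 hp1' n (First t s) (Twice t)
    rw [mul_add] at h6
    linarith
  · -- The measure of `F_s`, for `s = 0` and `s = 1`.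
    have hFs : Pr p n (fun l => X l (t + 3 * s) ≤ s) ≤
        if s = 0 then p ^ t else p ^ t * (((t : ℝ) + 3) * (1 - p) * p ^ 2 + p ^ 3) := by
      obtain ⟨r, rfl⟩ := Nat.exists_eq_add_of_le hd.1
      rw [Pr_prefix hp0 hp1' (t + 3 * s) r (fun x => x ≤ s)]
      interval_cases s
      · simp only [nonpos_iff_eq_zero]
        rw [Pr_all_true]
        simp
      · rw [if_neg one_ne_zero]
        have h1 : Pr p (t + 3 * 1) (fun l => X l (t + 3 * 1) ≤ 1) ≤
            Pr p (t + 3 * 1) (fun l => X l (t + 3 * 1) = 0 ∨ X l (t + 3 * 1) = 1) :=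
          Pr_mono hp0 hp1' fun l _ h => by omega
        refine (h1.trans (Pr_or hp0 hp1' _ _ _)).trans (le_of_eq ?_)
        rw [Pr_all_true, show t + 3 * 1 = t + 2 + 1 by ring, Pr_one_false]
        push_cast
        ring
    have hF1 : ((t : ℝ) + 3) * (1 - p) * p ^ 2 + p ^ 3 ≤ 1 := by
      nlinarith [mul_le_mul_of_nonneg_right hT hq.le]
    rcases near_case hS h₀ hd hs with hall | ⟨v, m, hmv, hmn, hcov⟩
    · refine (Pr_mono hp0 hp1' fun l _ hl => hall l hl).trans (hFs.trans ?_)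
      split_ifs
      · exact le_rfl
      · exact mul_le_of_le_one_right hpt.le hF1
    have h1 : Pr p n S ≤ Pr p n (fun l => (X l (t + 3 * s) ≤ s ∧ ¬ Lost t s m l)) +
        Pr p n (Hit (t + (v + 1))) :=
      (Pr_mono hp0 hp1' fun l _ hl => hcov l hl).trans (Pr_or hp0 hp1' _ _ _)
    have h2 := Pr_split (p := p) n (fun l => X l (t + 3 * s) ≤ s) (Lost t s m)
    have h3 : Pr p n (Lost t s m) ≤ Pr p n (fun l => X l (t + 3 * s) ≤ s ∧ Lost t s m l) :=
      Pr_mono hp0 hp1' fun l hlen hL => ⟨(lost_facts hlen hL).2.1.le, hL⟩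
    have h4 : Pr p (t + s) (fun l => X l (t + s) = s) * p ^ (2 * s) *
        ((1 - p) ^ (v + 1) * (1 - beta p ^ 2)) ≤ Pr p n (Lost t s m) := by
      obtain ⟨r, hr⟩ := Nat.exists_eq_add_of_le hmn
      have := Pr_lost hp0 hp1' hβ hβ' t s m r
      rw [show t + s + (2 * s + (m + r)) = n by omega] at this
      refine le_trans ?_ this
      have h5 := Pr_nonneg hp0 hp1' (t + s) (fun l => X l (t + s) = s)
      have h6 := one_sub_beta_sq hp hp1
      have h7 : (1 - p) ^ (v + 1) ≤ (1 - p) ^ m :=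
        pow_le_pow_of_le_one hq.le (by linarith) hmv
      refine mul_le_mul_of_nonneg_left (mul_le_mul_of_nonneg_right h7 (by linarith)) ?_
      positivity
    have h5 := Pr_hit hp0 hp1' hβ hβ' n (t + (v + 1))
    rw [pow_add, beta_pow, mul_assoc] at h5
    interval_cases s
    · have h6 := mul_le_mul_of_nonneg_left (numerics_zero hp hp1 t v hT) hpt.le
      simp only [add_zero, mul_zero, pow_zero, mul_one, if_true] at h4 hFs h2 h3 h1
      rw [Pr_all_true] at h4
      linarith
    · have h6 := mul_le_mul_of_nonneg_left (numerics_one hp hp1 t v hT) hpt.le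
      rw [if_neg one_ne_zero] at hFs
      rw [Pr_one_false] at h4
      have h7 : ((t : ℝ) + 1) * (1 - p) * p ^ t * p ^ (2 * 1) *
          ((1 - p) ^ (v + 1) * (1 - beta p ^ 2)) = p ^ t * (((t : ℝ) + 1) * (1 - p) * p ^ 2 *
            ((1 - p) ^ (v + 1) * (1 - beta p ^ 2))) := by ring
      rw [h7] at h4
      rw [mul_add, mul_sub] at h6
      linarith

end Main

/-! ### Conclusion -/

/-- Proposition: for `t ≥ 43`, `n ≥ t` and `0 < p ≤ p₀(t)`, every 3-wise
`t`-intersecting family `𝒢 ⊆ 2^[n]` satisfies `μ_p(𝒢) ≤ p^t`. -/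
theorem prop_t43 (t n : ℕ) (ht : 43 ≤ t) (hn : t ≤ n) (p : ℝ)
    (hp : 0 < p) (hpp : p ≤ p0 t)
    (𝒢 : Finset (Finset ℕ)) (hfam : FamilyOn n 𝒢) (hint : Intersecting3 t 𝒢) :
    mu p n 𝒢 ≤ p ^ t := by
  obtain ⟨hp1, hT⟩ := bounds_of_le_p0 ht hp hpp
  have hp1' : p ≤ 1 := by linarith
  obtain ⟨ℋ, hF, hI, hS, hM, hle⟩ := exists_shifted p hp.le hp1' n t 𝒢 hfam hint
  refine hle.trans ((mu_le_Pr hp.le hp1' hF (fun l => ∃ G ∈ ℋ, word G 0 n = l)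
    (fun G hG => ⟨G, hG, rfl⟩)).trans (Pr_crossing ht hp hp1 hT ⟨?_, ?_⟩))
  · rintro l ⟨G, -, rfl⟩
    exact word_length G 0 n
  · rintro _ _ _ ⟨A, hA, rfl⟩ ⟨B, hB, rfl⟩ ⟨C, hC, rfl⟩
    obtain ⟨k, hk, h⟩ := exists_few_misses (by omega) hn hF hI hS hM hA hB hC
    refine ⟨k, hk, ?_⟩
    have key : ∀ G, miss G (t + k) = X (word G 0 n) (t + k) := by
      intro G
      have := X_word G 0 n (t + k) hk
      rwa [zero_add, miss_zero, zero_add] at this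
    rwa [key, key, key] at h
end

section
/- Let t ≥ 1, n ≥ t, and 0 < p < 2/3. Let 𝒲̈ ⊆ 2^[n] be the family of all subsets W ⊆ [n] whose walk does not hit the line y = 2x + t + 1 and hits the line y = 2x + t at least twice, i.e., there is no j with 3|W∩[j]| = 2j+t+1, and there exist at least two distinct values 0 ≤ j₁ < j₂ ≤ n with 3|W∩[j₁]| = 2j₁+t and 3|W∩[j₂]| = 2j₂+t. Then μ_p(𝒲̈) ≤ α^{t+2}, where α = (√((1+3p)/(1−p)) − 1)/2. -/
/-!
Put `S_j = 3|W ∩ [j]| - 2j`, a random walk with steps `+1` (probability `p`) and `-2`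
(probability `q = 1 - p`). The number `α` is the root in `(0, 1)` of `p + q α³ = α`, so `α ^ (-S_j)`
is a martingale, and `α ^ d` bounds the probability of ever climbing `d` levels. A walk in the
family climbs to level `t`, must then step down to `t - 2` (a step up would hit level `t + 1`), and
climbs two levels again; this has probability at most `α ^ t * q * α ^ 2 ≤ α ^ (t + 2)`.

The argument is run as a supermartingale estimate. `walkState` records the number of hits of level
`t` and the current distance below it (or that the walk has passed above it), and `potential`
assigns to each state a bound for the probability of still completing two hits. The expected
potential does not increase (`potential_step`, `sum_potential_le`), it starts at `α ^ (t + 2)`, and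
it equals `1` at the end on every member of the family (`walkState_of_not_hit`).
-/

open Finset

/-- The state of a walk relative to the level `t`: `none` once the walk has gone above level `t`,
and otherwise `some (m, d)`, where `m` is the number of hits of level `t` so far and `d` is the
distance of the current position below `t`. -/
abbrev WState := Option (ℕ × ℕ)

/-- Effect of a step `+1`. -/
def stepUp : WState → WState
  | none => none
  | some (_, 0) => none
  | some (m, 1) => some (m + 1, 0)
  | some (m, d + 2) => some (m, d + 1)

/-- Effect of a step `-2`. -/
def stepDown : WState → WState
  | none => none
  | some (m, d) => some (m, d + 2)

/-- The state after `n` steps of the walk of `W`, started at distance `t ≥ 1` below level `t`. -/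
def walkState (t : ℕ) (W : Finset ℕ) : ℕ → WState
  | 0 => some (0, t)
  | n + 1 => if n + 1 ∈ W then stepUp (walkState t W n) else stepDown (walkState t W n)

/-- An upper bound for the probability of completing two hits of level `t` without passing above
it. In the state `some (1, 0)` a step down is forced, which leaves two levels to climb. -/
def potential (a : ℝ) : WState → ℝ
  | none => 0
  | some (0, d) => a ^ (d + 2)
  | some (1, 0) => a ^ 2
  | some (1, d + 1) => a ^ (d + 1)
  | some (_ + 2, _) => 1

lemma potential_nonneg {a : ℝ} (ha : 0 ≤ a) (s : WState) : 0 ≤ potential a s := by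
  unfold potential
  split <;> positivity

/-- The potential is a supermartingale. -/
lemma potential_step {a p : ℝ} (ha : 0 ≤ a) (ha1 : a ≤ 1) (hp : 0 ≤ p) (hp1 : p ≤ 1)
    (h : p + (1 - p) * a ^ 3 = a) (s : WState) :
    p * potential a (stepUp s) + (1 - p) * potential a (stepDown s) ≤ potential a s := by
  have hp1' : 0 ≤ 1 - p := by linarith
  rcases s with _ | ⟨m, d⟩
  · simp [stepUp, stepDown, potential]
  rcases m with _ | _ | m
  · rcases d with _ | _ | d
    · simp only [stepUp, stepDown, potential]
      have h4 : a ^ 4 ≤ a ^ 2 := pow_le_pow_of_le_one ha ha1 (by norm_num)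
      have h4' : 0 ≤ a ^ 4 := by positivity
      norm_num
      nlinarith
    · simp only [stepUp, stepDown, potential]
      apply le_of_eq
      linear_combination a ^ 2 * h
    · simp only [stepUp, stepDown, potential]
      apply le_of_eq
      linear_combination a ^ (d + 3) * h
  · rcases d with _ | _ | d
    · simp only [stepUp, stepDown, potential]
      have h4' : 0 ≤ a ^ 2 := by positivity
      norm_num
      nlinarith
    · simp only [stepUp, stepDown, potential]
      apply le_of_eq
      linear_combination h
    · simp only [stepUp, stepDown, potential]
      apply le_of_eq
      linear_combination a ^ (d + 1) * h
  · rcases d with _ | _ | d <;> simp only [stepUp, stepDown, potential] <;> linarith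

lemma walkState_congr (t : ℕ) {W W' : Finset ℕ} (n : ℕ) (h : ∀ j ≤ n, j ∈ W ↔ j ∈ W') :
    walkState t W n = walkState t W' n := by
  induction n with
  | zero => rfl
  | succ n ih =>
    simp only [walkState]
    rw [ih fun j hj => h j (by omega)]
    simp only [h (n + 1) le_rfl]

lemma sum_potential_le {a p : ℝ} (ha : 0 ≤ a) (ha1 : a ≤ 1) (hp : 0 ≤ p) (hp1 : p ≤ 1)
    (h : p + (1 - p) * a ^ 3 = a) (t n : ℕ) :
    ∑ W ∈ (Finset.Icc 1 n).powerset,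
      p ^ W.card * (1 - p) ^ (n - W.card) * potential a (walkState t W n) ≤ a ^ (t + 2) := by
  have hp1' : 0 ≤ 1 - p := by linarith
  induction n with
  | zero => simp [walkState, potential]
  | succ n ih =>
    have hI : Finset.Icc 1 (n + 1) = insert (n + 1) (Finset.Icc 1 n) := by
      ext x; simp only [Finset.mem_Icc, Finset.mem_insert]; omega
    rw [hI, Finset.sum_powerset_insert (by simp), ← Finset.sum_add_distrib]
    refine le_trans (Finset.sum_le_sum fun W hW => ?_) ih
    rw [Finset.mem_powerset] at hW
    have hnW : n + 1 ∉ W := fun hx => by have := Finset.mem_Icc.1 (hW hx); omega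
    have hcard : W.card ≤ n := by simpa using Finset.card_le_card hW
    have h1 : walkState t W (n + 1) = stepDown (walkState t W n) := by
      simp [walkState, hnW]
    have h2 : walkState t (insert (n + 1) W) (n + 1) = stepUp (walkState t W n) := by
      simp only [walkState, Finset.mem_insert_self, if_true]
      rw [walkState_congr t (W' := W) n]
      intro j hj
      rw [Finset.mem_insert]
      exact ⟨fun h => h.resolve_left (by omega), Or.inr⟩
    rw [h1, h2, Finset.card_insert_of_notMem hnW, Nat.succ_sub hcard, Nat.add_sub_add_right]
    have hw : 0 ≤ p ^ W.card * (1 - p) ^ (n - W.card) := by positivity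
    have := mul_le_mul_of_nonneg_left (potential_step ha ha1 hp hp1 h (walkState t W n)) hw
    refine le_trans (le_of_eq ?_) this
    rw [pow_succ, pow_succ]
    ring

/-- As long as level `t + 1` has not been hit, `walkState` really records the distance below level
`t` and the number of hits of that level. -/
lemma walkState_of_not_hit (t : ℕ) (ht : 1 ≤ t) (W : Finset ℕ) (n : ℕ)
    (h : ∀ j ≤ n, 3 * (W ∩ Finset.Icc 1 j).card ≠ 2 * j + (t + 1)) :
    ∃ m d, walkState t W n = some (m, d) ∧ 3 * (W ∩ Finset.Icc 1 n).card + d = 2 * n + t ∧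
      m = ((Finset.range (n + 1)).filter
        fun j => 3 * (W ∩ Finset.Icc 1 j).card = 2 * j + t).card := by
  induction n with
  | zero =>
    refine ⟨0, t, rfl, by simp, ?_⟩
    symm
    rw [Finset.card_eq_zero, Finset.filter_eq_empty_iff]
    intro j hj
    obtain rfl : j = 0 := by simpa using hj
    simp
    omega
  | succ n ih =>
    obtain ⟨m, d, hs, hd, hm⟩ := ih fun j hj => h j (by omega)
    have hI : Finset.Icc 1 (n + 1) = insert (n + 1) (Finset.Icc 1 n) := by
      ext x; simp only [Finset.mem_Icc, Finset.mem_insert]; omega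
    have hlast := h (n + 1) le_rfl
    rw [Finset.range_add_one, Finset.filter_insert]
    by_cases hW : n + 1 ∈ W
    · have hc : (W ∩ Finset.Icc 1 (n + 1)).card = (W ∩ Finset.Icc 1 n).card + 1 := by
        rw [hI, Finset.inter_insert_of_mem hW, Finset.card_insert_of_notMem (by simp)]
      rw [hc] at hlast ⊢
      rcases d with _ | _ | d
      · omega
      · refine ⟨m + 1, 0, by simp [walkState, hW, hs, stepUp], by omega, ?_⟩
        rw [if_pos (by omega), Finset.card_insert_of_notMem (by simp), hm]
      · refine ⟨m, d + 1, by simp [walkState, hW, hs, stepUp], by omega, ?_⟩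
        rw [if_neg (by omega), hm]
    · have hc : (W ∩ Finset.Icc 1 (n + 1)).card = (W ∩ Finset.Icc 1 n).card := by
        rw [hI, Finset.inter_insert_of_notMem hW]
      rw [hc] at hlast ⊢
      refine ⟨m, d + 2, by simp [walkState, hW, hs, stepDown], by omega, ?_⟩
      rw [if_neg (by omega), hm]

lemma alpha_props {p : ℝ} (hp : 0 < p) (hp' : p < 2 / 3) :
    0 ≤ alpha p ∧ alpha p ≤ 1 ∧ p + (1 - p) * alpha p ^ 3 = alpha p := by
  have hq : 0 < 1 - p := by linarith
  have hx1 : 1 ≤ (1 + 3 * p) / (1 - p) := by rw [le_div_iff₀ hq]; linarith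
  have hx9 : (1 + 3 * p) / (1 - p) ≤ 3 ^ 2 := by rw [div_le_iff₀ hq]; linarith
  have h1 : 1 ≤ √((1 + 3 * p) / (1 - p)) := Real.one_le_sqrt.2 hx1
  have h3 : √((1 + 3 * p) / (1 - p)) ≤ 3 := Real.sqrt_le_iff.2 ⟨by norm_num, hx9⟩
  have hs : √((1 + 3 * p) / (1 - p)) ^ 2 * (1 - p) = 1 + 3 * p := by
    rw [Real.sq_sqrt (by linarith), div_mul_cancel₀ _ hq.ne']
  unfold alpha
  refine ⟨by linarith, by linarith, ?_⟩
  -- `p + q a³ - a = (a - 1) (q a² + q a - p)`, and the last factor vanishes at `a = α`.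
  linear_combination ((√((1 + 3 * p) / (1 - p)) - 1) / 2 - 1) / 4 * hs

open scoped Classical in
/-- Claim 1: the family `𝒲̈` of walks hitting the line `y = 2x + t` at least
twice but not hitting `y = 2x + t + 1` has measure at most `α^{t+2}`. -/
theorem claim1 (t n : ℕ) (ht : 1 ≤ t) (hn : t ≤ n)
    (p : ℝ) (hp : 0 < p) (hp' : p < 2 / 3) :
    mu p n ((Finset.Icc 1 n).powerset.filter
      (fun W =>
        (¬ ∃ j : ℕ, j ≤ n ∧ 3 * (W ∩ Finset.Icc 1 j).card = 2 * j + (t + 1)) ∧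
        ∃ j₁ j₂ : ℕ, j₁ < j₂ ∧ j₂ ≤ n ∧
          3 * (W ∩ Finset.Icc 1 j₁).card = 2 * j₁ + t ∧
          3 * (W ∩ Finset.Icc 1 j₂).card = 2 * j₂ + t)) ≤
      alpha p ^ (t + 2) := by
  obtain ⟨ha, ha1, h⟩ := alpha_props hp hp'
  have hq : 0 ≤ 1 - p := by linarith
  refine le_trans ?_ (sum_potential_le ha ha1 hp.le (by linarith) h t n)
  unfold mu
  rw [Finset.sum_filter]
  refine Finset.sum_le_sum fun W _ => ?_
  have hw : 0 ≤ p ^ W.card * (1 - p) ^ (n - W.card) := by positivity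
  split_ifs with hW
  · obtain ⟨hno, j₁, j₂, hlt, hle, h1, h2⟩ := hW
    obtain ⟨m, d, hs, -, hm⟩ := walkState_of_not_hit t ht W n
      fun j hj hj' => hno ⟨j, hj, hj'⟩
    have hm2 : 1 < m := by
      rw [hm, Finset.one_lt_card]
      refine ⟨j₁, ?_, j₂, ?_, hlt.ne⟩
      · rw [Finset.mem_filter, Finset.mem_range]
        exact ⟨by omega, h1⟩
      · rw [Finset.mem_filter, Finset.mem_range]
        exact ⟨by omega, h2⟩
    obtain ⟨k, rfl⟩ : ∃ k, m = k + 2 := ⟨m - 2, by omega⟩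
    simp [hs, potential]
  · exact mul_nonneg hw (potential_nonneg ha _)
end

section
/- Let t ≥ 15, n ≥ t, and 0 < p ≤ p_0(t). Let 𝒢 ⊆ 2^[n] be a family such that every G ∈ 𝒢 either hits the line y = 2x + t + 1, or hits the line y = 2x + t at least twice (at two distinct steps) without hitting y = 2x + t + 1. Then μ_p(𝒢) ≤ α^{t+2} + α^{t+1} < p^t, where α = (√((1+3p)/(1−p)) − 1)/2. -/
/-!
Follow the height `S j = 3|G ∩ [j]| - 2j` of the walk above the line `y = 2x`: it rises by one with
probability `p` and drops by two with probability `q = 1 - p`. The number `α` satisfies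
`α² + α = p/q`, hence `p + qα³ = α`, so `α ^ (c - S j)` is a martingale.

*Measure bound.* Every member of the family reaches height `t + 1` or visits height `t` twice.
After a first visit to `t`, this happens with probability at most `A = p + qα²` (step up, or
step down and climb back two levels). The function `pot` is the resulting bound on the conditional
probability given the first `k` steps. It is a supermartingale (`pot_step`), equals `1` once
the event has occurred, and starts at `A α^t = (α + qα²(1 - α)) α^t ≤ α^(t+1) + α^(t+2)`.
`sum_le_start` is the corresponding maximal inequality on finite sums.

*Numerical inequality.* As `α² + α = p/q`, the claim is `(α/p)^t < q/p`. The hypothesis `p ≤ p₀(t)`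
says `t p² ≤ 1 + p - 2p²`. On the other hand `α/p ≤ 1 + p²/(1 + p - 2p²)`, because
substituting the right side in the quadratic leaves a positive multiple of `p⁵` as surplus. Hence `(α/p)^t ≤ e`, and
`e < q/p` when `t ≥ 16`. For `t = 15`, the bound `α ≤ 1.0665 p` suffices.
-/

open Finset

/-! ### The quadratic equation for `α` -/

lemma alpha_facts {p : ℝ} (hp : 0 < p) (hp1 : p < 1) :
    0 < alpha p ∧ (1 - p) * (alpha p ^ 2 + alpha p) = p := by
  have hq : 0 < 1 - p := by linarith
  have h1 : 1 < (1 + 3 * p) / (1 - p) := by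
    rw [lt_div_iff₀ hq]; linarith
  have h2 : 1 < Real.sqrt ((1 + 3 * p) / (1 - p)) := by
    rw [Real.lt_sqrt (by norm_num)]; linarith
  have h3 : Real.sqrt ((1 + 3 * p) / (1 - p)) ^ 2 * (1 - p) = 1 + 3 * p := by
    rw [Real.sq_sqrt (by linarith)]
    field_simp
  unfold alpha
  constructor
  · linarith
  · linear_combination h3 / 4

/-- Comparison with the positive root of `x² + x = p/q`. -/
lemma alpha_le {p x : ℝ} (hp : 0 < p) (hp1 : p < 1) (hx : 0 ≤ x)
    (h : p ≤ (1 - p) * (x ^ 2 + x)) : alpha p ≤ x := by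
  obtain ⟨h0, h1⟩ := alpha_facts hp hp1
  by_contra! hlt
  have : (1 - p) * (x ^ 2 + x) < (1 - p) * (alpha p ^ 2 + alpha p) := by
    apply mul_lt_mul_of_pos_left _ (by linarith)
    nlinarith
  linarith

/-! ### The numerical inequality -/

lemma p0_bound {t : ℕ} {p : ℝ} (hp : 0 < p) (hpp : p ≤ p0 t) :
    (t : ℝ) * p ^ 2 ≤ 1 + p - 2 * p ^ 2 := by
  unfold p0 at hpp
  have hs : 1 < Real.sqrt (4 * t + 9) := by
    rw [Real.lt_sqrt (by norm_num)]
    have : (0 : ℝ) ≤ t := Nat.cast_nonneg t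
    linarith
  rw [le_div_iff₀ (by linarith)] at hpp
  have h2 : Real.sqrt (4 * t + 9) ^ 2 = 4 * t + 9 := Real.sq_sqrt (by positivity)
  have h3 : (p * Real.sqrt (4 * t + 9)) ^ 2 ≤ (2 + p) ^ 2 :=
    pow_le_pow_left₀ (by positivity) (by linarith) 2
  rw [mul_pow, h2] at h3
  nlinarith

lemma p_lt {t : ℕ} {p : ℝ} (ht : 15 ≤ t) (hp : 0 < p) (hpp : p ≤ p0 t) : p < 0.2738 := by
  have h := p0_bound hp hpp
  have ht' : (15 : ℝ) ≤ t := by exact_mod_cast ht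
  by_contra! hc
  nlinarith [mul_nonneg (sub_nonneg.2 ht') (sq_nonneg p)]

lemma numeric {t : ℕ} {p : ℝ} (ht : 15 ≤ t) (hp : 0 < p) (hpp : p ≤ p0 t) :
    alpha p ^ (t + 2) + alpha p ^ (t + 1) < p ^ t := by
  have hlt := p_lt ht hp hpp
  have hp1 : p < 1 := by linarith
  have hq : 0 < 1 - p := by linarith
  have h := p0_bound hp hpp
  obtain ⟨h0, h1⟩ := alpha_facts hp hp1
  have key : ∀ c : ℝ, 0 ≤ c → alpha p ≤ c * p → c ^ t * p < 1 - p →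
      alpha p ^ (t + 2) + alpha p ^ (t + 1) < p ^ t := by
    intro c hc hle hlt
    have h2 : alpha p ^ t ≤ c ^ t * p ^ t := by
      rw [← mul_pow]; exact pow_le_pow_left₀ h0.le hle t
    have h3 : (1 - p) * (alpha p ^ (t + 2) + alpha p ^ (t + 1)) = alpha p ^ t * p := by
      linear_combination alpha p ^ t * h1
    have h4 : alpha p ^ t * p ≤ c ^ t * p ^ t * p := mul_le_mul_of_nonneg_right h2 hp.le
    have h5 : p ^ t * (c ^ t * p) < p ^ t * (1 - p) := mul_lt_mul_of_pos_left hlt (pow_pos hp t)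
    by_contra! h6
    have h7 := mul_le_mul_of_nonneg_left h6 hq.le
    linarith
  rcases ht.eq_or_lt with rfl | ht
  · refine key 1.0665 (by norm_num) ?_ ?_
    · apply alpha_le hp hp1 (by positivity)
      -- after division by `p` this is concave in `p`, so it holds between `0` and `0.2738`
      have : 0 ≤ (1 - p) * (1.0665 ^ 2 * p + 1.0665) - 1 := by nlinarith
      nlinarith
    · norm_num
      linarith
  · have ht' : (16 : ℝ) ≤ t := by exact_mod_cast ht
    have hlt2 : p < 0.266 := by
      by_contra! hc
      nlinarith [mul_nonneg (sub_nonneg.2 ht') (sq_nonneg p)]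
    have hD : 0 < 1 + p - 2 * p ^ 2 := by nlinarith
    set x := p ^ 2 / (1 + p - 2 * p ^ 2) with hx
    have hx0 : 0 ≤ x := by positivity
    refine key (1 + x) (by linarith) ?_ ?_
    · apply alpha_le hp hp1 (by positivity)
      have e : (1 - p) * (((1 + x) * p) ^ 2 + (1 + x) * p) - p
          = p * (p ^ 5 * (1 - p)) / (1 + p - 2 * p ^ 2) ^ 2 := by
        have hy : x * (1 + p - 2 * p ^ 2) = p ^ 2 := by rw [hx, div_mul_cancel₀ _ hD.ne']
        rw [eq_div_iff (pow_pos hD 2).ne']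
        linear_combination (1 - p) * (p ^ 2 * (2 * (1 + p - 2 * p ^ 2)
          + x * (1 + p - 2 * p ^ 2) + p ^ 2) + p * (1 + p - 2 * p ^ 2)) * hy
      have : 0 ≤ p * (p ^ 5 * (1 - p)) / (1 + p - 2 * p ^ 2) ^ 2 := by positivity
      linarith
    · have h2 : (1 + x) ^ t ≤ Real.exp 1 := by
        calc (1 + x) ^ t ≤ Real.exp x ^ t := by
              apply pow_le_pow_left₀ (by linarith)
              linarith [Real.add_one_le_exp x]
          _ = Real.exp (t * x) := (Real.exp_nat_mul x t).symm
          _ ≤ Real.exp 1 := by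
              apply Real.exp_le_exp.2
              rw [hx, ← mul_div_assoc, div_le_one hD]
              exact h
      have h3 := Real.exp_one_lt_d9
      nlinarith

/-! ### The supermartingale -/

/-- By time `k` the path `S` has reached height `t + 1` or visited height `t` twice. -/
def Done (t : ℕ) (S : ℕ → ℤ) (k : ℕ) : Prop :=
  (∃ j ≤ k, (t : ℤ) + 1 ≤ S j) ∨ ∃ i j, i < j ∧ j ≤ k ∧ S i = t ∧ S j = t

open Classical in
/-- Upper bound for the probability that a walk with first `k` heights given by `S` is
eventually `Done`; here `a` plays the role of `α` and `p + (1 - p) a ^ 2` bounds that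
probability right after the first visit to height `t`. As long as the walk is not `Done`
its height is at most `t`, so `toNat` loses nothing. -/
noncomputable def pot (p a : ℝ) (t : ℕ) (S : ℕ → ℤ) (k : ℕ) : ℝ :=
  if Done t S k then 1
  else if ∃ j ≤ k, S j = t then
    if S k = t then p + (1 - p) * a ^ 2 else a ^ (t - S k).toNat
  else (p + (1 - p) * a ^ 2) * a ^ (t - S k).toNat

lemma pot_nonneg {p a : ℝ} (hp : 0 < p) (hp1 : p < 1) (ha : 0 < a) (t : ℕ) (S : ℕ → ℤ) (k : ℕ) :
    0 ≤ pot p a t S k := by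
  have : 0 < 1 - p := by linarith
  unfold pot
  split_ifs <;> positivity

lemma pot_step {p a : ℝ} (ha : p + (1 - p) * a ^ 3 = a)
    {t k : ℕ} {S U D : ℕ → ℤ} (hU : ∀ j ≤ k, U j = S j) (hD : ∀ j ≤ k, D j = S j)
    (hU' : U (k + 1) = S k + 1) (hD' : D (k + 1) = S k - 2) :
    p * pot p a t U (k + 1) + (1 - p) * pot p a t D (k + 1) ≤ pot p a t S k := by
  have mono : ∀ T : ℕ → ℤ, (∀ j ≤ k, T j = S j) → Done t S k → Done t T (k + 1) := by
    rintro T hT (⟨j, hj, h⟩ | ⟨i, j, hij, hj, h1, h2⟩)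
    · exact Or.inl ⟨j, by omega, by rw [hT j hj]; exact h⟩
    · exact Or.inr ⟨i, j, hij, by omega, by rw [hT i (by omega)]; exact h1,
        by rw [hT j hj]; exact h2⟩
  by_cases hS : Done t S k
  · simp [pot, hS, mono U hU hS, mono D hD hS]
  have hle : S k ≤ t := by
    by_contra! hc
    exact hS (Or.inl ⟨k, le_rfl, by omega⟩)
  -- a new occurrence of the event must happen at time `k + 1`
  have newDone : ∀ T : ℕ → ℤ, (∀ j ≤ k, T j = S j) → Done t T (k + 1) →
      (t : ℤ) + 1 ≤ T (k + 1) ∨ (T (k + 1) = t ∧ ∃ j ≤ k, S j = t) := by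
    rintro T hT (⟨j, hj, h⟩ | ⟨i, j, hij, hj, h1, h2⟩)
    · rcases Nat.lt_or_ge k j with hjk | hjk
      · obtain rfl : j = k + 1 := by omega
        exact Or.inl h
      · exact absurd (Or.inl ⟨j, hjk, by rw [← hT j hjk]; exact h⟩) hS
    · have hi : S i = t := by rw [← hT i (by omega)]; exact h1
      rcases Nat.lt_or_ge k j with hjk | hjk
      · obtain rfl : j = k + 1 := by omega
        exact Or.inr ⟨h2, i, by omega, hi⟩
      · exact absurd (Or.inr ⟨i, j, hij, hjk, hi, by rw [← hT j hjk]; exact h2⟩) hS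
  have hDd : ¬ Done t D (k + 1) := by
    intro h
    rcases newDone D hD h with h | h <;> omega
  have hDne : D (k + 1) ≠ t := by omega
  obtain ⟨m, hm⟩ : ∃ m : ℕ, (t : ℤ) - S k = m := ⟨(t - S k).toNat, by omega⟩
  have hDm : ((t : ℤ) - D (k + 1)).toNat = m + 2 := by omega
  have hSm : ((t : ℤ) - S k).toNat = m := by omega
  by_cases hit : ∃ j ≤ k, S j = t
  · obtain ⟨j, hj, hjt⟩ := hit
    have hitT : ∀ T : ℕ → ℤ, (∀ j ≤ k, T j = S j) → ∃ j ≤ k + 1, T j = t :=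
      fun T hT => ⟨j, by omega, by rw [hT j hj]; exact hjt⟩
    have eD : pot p a t D (k + 1) = a ^ (m + 2) := by
      simp only [pot, hDd, hitT D hD, hDne, hDm, if_true, if_false]
    by_cases hk : S k = t
    · have hUd : Done t U (k + 1) := Or.inl ⟨k + 1, le_rfl, by omega⟩
      have hm0 : m = 0 := by omega
      have hit' : ∃ j ≤ k, S j = t := ⟨j, hj, hjt⟩
      rw [eD]
      simp only [pot, hUd, hS, hit', hk, hm0, if_true, if_false]
      simp
    · have hit' : ∃ j ≤ k, S j = t := ⟨j, hj, hjt⟩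
      have eS : pot p a t S k = a ^ m := by
        simp only [pot, hS, hit', hk, hSm, if_true, if_false]
      rw [eD, eS]
      obtain ⟨l, rfl⟩ : ∃ l, m = l + 1 := ⟨m - 1, by omega⟩
      have eU : pot p a t U (k + 1) = a ^ l := by
        by_cases hl : l = 0
        · have hUd : Done t U (k + 1) :=
            Or.inr ⟨j, k + 1, by omega, le_rfl, by rw [hU j hj]; exact hjt, by omega⟩
          simp [pot, hUd, hl]
        · have hUd : ¬ Done t U (k + 1) := by
            intro h
            rcases newDone U hU h with h | h <;> omega
          have hUne : U (k + 1) ≠ t := by omega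
          have hUm : ((t : ℤ) - U (k + 1)).toNat = l := by omega
          simp only [pot, hUd, hitT U hU, hUne, hUm, if_true, if_false]
      rw [eU]
      apply le_of_eq
      linear_combination a ^ l * ha
  · have hk : S k ≠ t := fun h => hit ⟨k, le_rfl, h⟩
    obtain ⟨l, rfl⟩ : ∃ l, m = l + 1 := ⟨m - 1, by omega⟩
    have hitT : ∀ T : ℕ → ℤ, (∀ j ≤ k, T j = S j) → T (k + 1) ≠ t → ¬ ∃ j ≤ k + 1, T j = t := by
      rintro T hT hne ⟨j, hj, h⟩
      rcases Nat.lt_or_ge k j with hjk | hjk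
      · obtain rfl : j = k + 1 := by omega
        exact hne h
      · exact hit ⟨j, hjk, by rw [← hT j hjk]; exact h⟩
    have hUd : ¬ Done t U (k + 1) := by
      intro h
      rcases newDone U hU h with h | h
      · omega
      · exact hit h.2
    have eD : pot p a t D (k + 1) = (p + (1 - p) * a ^ 2) * a ^ (l + 1 + 2) := by
      simp only [pot, hDd, hitT D hD hDne, hDm, if_false]
    have eS : pot p a t S k = (p + (1 - p) * a ^ 2) * a ^ (l + 1) := by
      simp only [pot, hS, hit, hSm, if_false]
    have eU : pot p a t U (k + 1) = (p + (1 - p) * a ^ 2) * a ^ l := by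
      have hUm : ((t : ℤ) - U (k + 1)).toNat = l := by omega
      by_cases hl : U (k + 1) = t
      · have hl0 : l = 0 := by omega
        have hitU : ∃ j ≤ k + 1, U j = t := ⟨k + 1, le_rfl, hl⟩
        simp only [pot, hUd, hitU, hl, if_true, if_false]
        simp [hl0]
      · simp only [pot, hUd, hitT U hU hl, hUm, if_false]
    rw [eD, eS, eU]
    apply le_of_eq
    linear_combination (p + (1 - p) * a ^ 2) * a ^ l * ha

/-! ### Averaging over subsets of `[n]` -/

/-- A supermartingale on the cube has final expectation at most its initial value. -/
lemma sum_le_start {p : ℝ} (hp : 0 < p) (hp1 : p < 1) (Φ : ℕ → Finset ℕ → ℝ)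
    (hstep : ∀ k, ∀ G ⊆ Finset.Icc 1 k,
      p * Φ (k + 1) (insert (k + 1) G) + (1 - p) * Φ (k + 1) G ≤ Φ k G) (n : ℕ) :
    ∑ G ∈ (Finset.Icc 1 n).powerset, p ^ G.card * (1 - p) ^ (n - G.card) * Φ n G ≤ Φ 0 ∅ := by
  induction n with
  | zero => simp
  | succ k ih =>
    refine le_trans ?_ ih
    have hnot : k + 1 ∉ Finset.Icc 1 k := by simp
    have hI : Finset.Icc 1 (k + 1) = insert (k + 1) (Finset.Icc 1 k) := by
      ext x; simp only [Finset.mem_Icc, Finset.mem_insert]; omega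
    rw [hI, Finset.sum_powerset_insert hnot, ← Finset.sum_add_distrib]
    apply Finset.sum_le_sum
    intro G hG
    rw [Finset.mem_powerset] at hG
    have hc : G.card ≤ k := by simpa using Finset.card_le_card hG
    rw [Finset.card_insert_of_notMem (fun h => hnot (hG h))]
    have e1 : k + 1 - G.card = (k - G.card) + 1 := by omega
    have e2 : k + 1 - (G.card + 1) = k - G.card := by omega
    rw [e1, e2]
    have hw : 0 ≤ p ^ G.card * (1 - p) ^ (k - G.card) := by
      have : 0 < 1 - p := by linarith
      positivity
    have := mul_le_mul_of_nonneg_left (hstep k G hG) hw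
    refine le_trans (le_of_eq ?_) this
    ring

/-- Height of the walk of `G` above the line `y = 2x` (scaled so that an up-step counts `1`
and a right-step `-2`). -/
def height (G : Finset ℕ) (j : ℕ) : ℤ := 3 * ((G ∩ Finset.Icc 1 j).card : ℤ) - 2 * j

lemma height_insert {G : Finset ℕ} {k j : ℕ} (hj : j ≤ k) :
    height (insert (k + 1) G) j = height G j := by
  unfold height
  rw [Finset.insert_inter_of_notMem]
  simp only [Finset.mem_Icc]; omega

lemma height_succ_insert {G : Finset ℕ} {k : ℕ} (hG : G ⊆ Finset.Icc 1 k) :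
    height (insert (k + 1) G) (k + 1) = height G k + 1 := by
  unfold height
  have h1 : G ∩ Finset.Icc 1 k = G := Finset.inter_eq_left.2 hG
  have h2 : insert (k + 1) G ∩ Finset.Icc 1 (k + 1) = insert (k + 1) G := by
    apply Finset.inter_eq_left.2
    intro x hx
    rcases Finset.mem_insert.1 hx with rfl | hx
    · simp
    · have := Finset.mem_Icc.1 (hG hx)
      exact Finset.mem_Icc.2 (by omega)
  have h3 : k + 1 ∉ G := fun h => by
    have := Finset.mem_Icc.1 (hG h)
    omega
  rw [h1, h2, Finset.card_insert_of_notMem h3]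
  push_cast; ring

lemma height_succ {G : Finset ℕ} {k : ℕ} (hG : G ⊆ Finset.Icc 1 k) :
    height G (k + 1) = height G k - 2 := by
  unfold height
  have h1 : G ∩ Finset.Icc 1 k = G := Finset.inter_eq_left.2 hG
  have h2 : G ∩ Finset.Icc 1 (k + 1) = G :=
    Finset.inter_eq_left.2 (hG.trans (Finset.Icc_subset_Icc_right (by omega)))
  rw [h1, h2]
  push_cast; ring

/-- Claim 2: for `t ≥ 15` and `0 < p ≤ p₀(t)`, any family each of whose members
hits `y = 2x + t + 1`, or hits `y = 2x + t` at least twice without hitting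
`y = 2x + t + 1`, has measure at most `α^{t+2} + α^{t+1} < p^t`. -/
theorem claim2 (t n : ℕ) (ht : 15 ≤ t) (hn : t ≤ n)
    (p : ℝ) (hp : 0 < p) (hpp : p ≤ p0 t)
    (𝒢 : Finset (Finset ℕ)) (hfam : FamilyOn n 𝒢)
    (hhit : ∀ G ∈ 𝒢,
      HitsLine n (t + 1) G ∨
        ((∃ j₁ j₂ : ℕ, j₁ < j₂ ∧ j₂ ≤ n ∧
            3 * (G ∩ Finset.Icc 1 j₁).card = 2 * j₁ + t ∧
            3 * (G ∩ Finset.Icc 1 j₂).card = 2 * j₂ + t) ∧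
          ¬ HitsLine n (t + 1) G)) :
    mu p n 𝒢 ≤ alpha p ^ (t + 2) + alpha p ^ (t + 1) ∧
      alpha p ^ (t + 2) + alpha p ^ (t + 1) < p ^ t := by
  refine ⟨?_, numeric ht hp hpp⟩
  have hp1 : p < 1 := by linarith [p_lt ht hp hpp]
  have hq : 0 < 1 - p := by linarith
  obtain ⟨h0, h1⟩ := alpha_facts hp hp1
  set a := alpha p
  have ha : p + (1 - p) * a ^ 3 = a := by linear_combination (a - 1) * h1
  have hdone : ∀ G ∈ 𝒢, pot p a t (height G) n = 1 := by
    intro G hG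
    have : Done t (height G) n := by
      rcases hhit G hG with ⟨j, hj, h⟩ | ⟨⟨i, j, hij, hj, h, h'⟩, -⟩
      · exact Or.inl ⟨j, hj, by unfold height; omega⟩
      · exact Or.inr ⟨i, j, hij, hj, by unfold height; omega, by unfold height; omega⟩
    simp [pot, this]
  have hstart : pot p a t (height ∅) 0 = (p + (1 - p) * a ^ 2) * a ^ t := by
    have hd : ¬ Done t (height ∅) 0 := by
      rintro (⟨j, hj, h⟩ | ⟨i, j, hij, hj, -⟩)
      · simp [height] at h; omega
      · omega
    have hh : ¬ ∃ j ≤ 0, height ∅ j = t := by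
      rintro ⟨j, hj, h⟩
      simp [height] at h; omega
    simp only [pot, hd, hh, if_false]
    simp [height]
  have hsum := sum_le_start hp hp1 (fun k G => pot p a t (height G) k)
    (fun k G hG => pot_step ha (fun j hj => height_insert hj) (fun j _ => rfl)
      (height_succ_insert hG) (height_succ hG)) n
  simp only [hstart] at hsum
  calc mu p n 𝒢 = ∑ G ∈ 𝒢, p ^ G.card * (1 - p) ^ (n - G.card) * pot p a t (height G) n := by
        unfold mu
        refine Finset.sum_congr rfl fun G hG => ?_
        rw [hdone G hG, mul_one]
    _ ≤ ∑ G ∈ (Finset.Icc 1 n).powerset,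
          p ^ G.card * (1 - p) ^ (n - G.card) * pot p a t (height G) n := by
        apply Finset.sum_le_sum_of_subset_of_nonneg
        · intro G hG
          exact Finset.mem_powerset.2 (hfam G hG)
        · intro G _ _
          have := pot_nonneg hp hp1 h0 t (height G) n
          positivity
    _ ≤ (p + (1 - p) * a ^ 2) * a ^ t := hsum
    _ ≤ (a ^ 2 + a) * a ^ t := by
        apply mul_le_mul_of_nonneg_right _ (by positivity)
        have : 0 ≤ (1 - p) * a ^ 3 := by positivity
        have : 0 ≤ p * a ^ 2 := by positivity
        linarith
    _ = a ^ (t + 2) + a ^ (t + 1) := by ring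
end
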